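/- For every integer t ≥ 2 there exists a constant C_t such that for every integer n ≥ 1, the maximum size r_{2t+2}(n) of a family of n-permutations with VC-dimension at most 2t+2 satisfies r_{2t+2}(n) ≤ 2^{n·((2/t!)·α(n)^t + C_t·α(n)^{t−1})}. -/

import Mathlib

/-! ## Inverse Ackermann hierarchy -/

/-- Bounded-fuel iteration counter: number of applications of `f` needed to bring `m`
down to a value `≤ 1` (assuming `f` strictly decreases on values `≥ 2`). -/
def iterCount (f : ℕ → ℕ) : ℕ → ℕ → ℕ
  | 0, _ => 0
  | fuel + 1, m => if m ≤ 1 then 0 else 1 + iterCount f fuel (f m)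

/-- The inverse Ackermann hierarchy: `alphaHier 1 m = ⌈m/2⌉`, `alphaHier d 1 = 0` for `d ≥ 2`,
and `alphaHier d m = 1 + alphaHier d (alphaHier (d-1) m)` for `m, d ≥ 2`. -/
def alphaHier : ℕ → ℕ → ℕ
  | 0, m => m
  | 1, m => (m + 1) / 2
  | d + 2, m => iterCount (alphaHier (d + 1)) m m

/-- The inverse Ackermann function `α(m) = min {k ≥ 1 : α_k(m) ≤ 3}`. -/
noncomputable def invAck (m : ℕ) : ℕ := sInf {k : ℕ | 1 ≤ k ∧ alphaHier k m ≤ 3}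

/-! ## Permutations, restrictions, VC-dimension -/

/-- The restriction of the `n`-permutation `π` to the (increasing) `k`-tuple of positions `a`
is the `k`-permutation `σ`. -/
def PermRestrictionIs {n k : ℕ} (π : Equiv.Perm (Fin n)) (a : Fin k → Fin n)
    (σ : Equiv.Perm (Fin k)) : Prop :=
  ∀ i j : Fin k, σ i < σ j ↔ π (a i) < π (a j)

/-- The `k`-tuple of positions `a` is shattered by the family `P` of `n`-permutations. -/
def Shatters {n k : ℕ} (P : Finset (Equiv.Perm (Fin n))) (a : Fin k → Fin n) : Prop :=
  StrictMono a ∧ ∀ σ : Equiv.Perm (Fin k), ∃ π ∈ P, PermRestrictionIs π a σ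

/-- The family `P` of `n`-permutations has VC-dimension at most `k`:
no `(k+1)`-tuple of positions is shattered by `P`. -/
def VCDimLE (n k : ℕ) (P : Finset (Equiv.Perm (Fin n))) : Prop :=
  ∀ a : Fin (k + 1) → Fin n, ¬ Shatters P a

/-- The number of `1`-entries of the union of the permutation matrices of a family `P`
of `n`-permutations. -/
noncomputable def permOnes {n : ℕ} (P : Finset (Equiv.Perm (Fin n))) : ℕ :=
  Nat.card {p : Fin n × Fin n // ∃ π ∈ P, π p.2 = p.1}

/-- `v(P) = |M_P| / n`, the average number of `1`-entries per column of the union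
of the permutation matrices of the family `P`. -/
noncomputable def vPerm {n : ℕ} (P : Finset (Equiv.Perm (Fin n))) : ℝ :=
  (permOnes P : ℝ) / (n : ℝ)

/-! ## (0,1)-matrices -/

/-- The number of `1`-entries of a `(0,1)`-matrix (represented as a `Bool` matrix). -/
noncomputable def matOnes {m n : ℕ} (M : Fin m → Fin n → Bool) : ℕ :=
  Nat.card {p : Fin m × Fin n // M p.1 p.2 = true}

/-- The number of `1`-entries in column `j` of a `(0,1)`-matrix. -/
noncomputable def colOnes {m n : ℕ} (M : Fin m → Fin n → Bool) (j : Fin n) : ℕ :=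
  Nat.card {i : Fin m // M i j = true}

/-- The matrix `B` contains the matrix `S`. -/
def MatContains {m n p q : ℕ} (B : Fin m → Fin n → Bool) (S : Fin p → Fin q → Bool) : Prop :=
  ∃ (r : Fin p → Fin m) (c : Fin q → Fin n), StrictMono r ∧ StrictMono c ∧
    ∀ a b, S a b = true → B (r a) (c b) = true

/-- The `s × 2` matrix `DS_s`, with a `1`-entry in (1-indexed) row `i` and column `j`
exactly when `i + j` is odd. -/
def DS (s : ℕ) : Fin s → Fin 2 → Bool :=
  fun i j => decide ((i.val + j.val) % 2 = 1)

/-- The maximum number of `1`-entries in an `n × n` matrix avoiding `S`. -/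
noncomputable def exMat {p q : ℕ} (S : Fin p → Fin q → Bool) (n : ℕ) : ℕ :=
  sSup {x : ℕ | ∃ M : Fin n → Fin n → Bool, ¬ MatContains M S ∧ matOnes M = x}

/-- An `n × n` matrix is `k`-full if some increasing `k`-tuple of columns contains
every `k`-permutation matrix. -/
def IsFull (k : ℕ) {n : ℕ} (M : Fin n → Fin n → Bool) : Prop :=
  ∃ c : Fin k → Fin n, StrictMono c ∧ ∀ σ : Equiv.Perm (Fin k),
    ∃ r : Fin k → Fin n, StrictMono r ∧ ∀ b : Fin k, M (r (σ b)) (c b) = true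

/-- `pFull k n` is the maximum number of `1`-entries in an `n × n` matrix that is
not `(k+1)`-full. -/
noncomputable def pFull (k n : ℕ) : ℕ :=
  sSup {x : ℕ | ∃ M : Fin n → Fin n → Bool, ¬ IsFull (k + 1) M ∧ matOnes M = x}

/-! ## Formations -/

/-- `M` contains a `B`-fat `(r,s)`-formation: there are an `s`-partition of the rows into
intervals (the fibers of a monotone map `g`) and `r` columns, each having at least `B`
`1`-entries in every interval. -/
def FatFormation (B r s : ℕ) {m n : ℕ} (M : Fin m → Fin n → Bool) : Prop :=
  ∃ g : Fin m → Fin s, Monotone g ∧ ∃ c : Fin r → Fin n, StrictMono c ∧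
    ∀ (j : Fin r) (i : Fin s), B ≤ Nat.card {x : Fin m // g x = i ∧ M x (c j) = true}

/-- `M` contains a doubled `(r,s)`-formation: there are an `s`-partition of the rows into
intervals and `r` columns, each having at least one `1`-entry in the first and last
interval and at least two `1`-entries in every other interval. -/
def DoubledFormation (r s : ℕ) {m n : ℕ} (M : Fin m → Fin n → Bool) : Prop :=
  ∃ g : Fin m → Fin s, Monotone g ∧ ∃ c : Fin r → Fin n, StrictMono c ∧
    ∀ (j : Fin r) (i : Fin s),
      1 ≤ Nat.card {x : Fin m // g x = i ∧ M x (c j) = true} ∧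
      (i.val ≠ 0 → i.val ≠ s - 1 → 2 ≤ Nat.card {x : Fin m // g x = i ∧ M x (c j) = true})

/-! ## The functions R, D, β -/

/-- Nivasch's hierarchy `R_s(d)` (shifted as in the paper). -/
def Rfun : ℕ → ℕ → ℕ
  | 0, _ => 0
  | 1, _ => 0
  | 2, _ => 2
  | 3, _ => 3
  | 4, d => 2 * d + 1
  | _ + 5, 0 => 0
  | _ + 5, 1 => 0
  | s + 5, 2 => 2 ^ (s + 3) + 1
  | s + 5, d + 3 =>
      2 * (Rfun (s + 4) (d + 3) - 1) + (Rfun (s + 3) (d + 3) - 1) * (Rfun (s + 5) (d + 2) - 3) + 1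
  termination_by s d => (s, d)

/-- The hierarchy `D_s(d)`. -/
def Dfun : ℕ → ℕ → ℕ
  | 0, _ => 0
  | 1, _ => 0
  | 2, _ => 2
  | _ + 3, 0 => 0
  | _ + 3, 1 => 0
  | s + 3, 2 => 2 ^ (s + 2) + 2 ^ (s + 1) - 1
  | s + 3, d + 3 =>
      2 * Dfun (s + 2) (d + 3) + (Dfun (s + 1) (d + 3) + 1) * (Rfun (s + 3) (d + 2) - 3)
        + Dfun (s + 3) (d + 2) - Rfun (s + 3) (d + 2) + 1
  termination_by s d => (s, d)

/-- `β_s(m) = D_s(α(m))`. -/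
noncomputable def betaFun (s m : ℕ) : ℕ := Dfun s (invAck m)

/-! ## Sequences: MST and formations in sequences -/

/-- The list of column indices of the `1`-entries of a row, in increasing order. -/
def rowList {n : ℕ} (row : Fin n → Bool) : List (Fin n) :=
  (List.finRange n).filter (fun j => row j)

/-- The matrix → sequence transformation: read the rows top to bottom, writing for each
`1`-entry the index of its column. -/
def MST {m n : ℕ} (M : Fin m → Fin n → Bool) : List (Fin n) :=
  ((List.finRange m).map (fun i => rowList (M i))).flatten

/-- The list `L` contains an `(r,s)`-formation as a subsequence: a concatenation of `s`
permutations of the same `r`-element set of symbols is a sublist of `L`. -/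
def IsFormationSeq {A : Type*} [DecidableEq A] (r s : ℕ) (L : List A) : Prop :=
  ∃ (T : Finset A) (F : List (List A)), T.card = r ∧ F.length = s ∧
    (∀ l ∈ F, l.Nodup ∧ l.toFinset = T) ∧ List.Sublist F.flatten L

/-!
Let `P` be a family of `n`-permutations of VC-dimension at most `k = 2t + 2`. Divide the values
into `m = n / q` intervals and replace every value by the index of its interval, which loses a
factor of at most `q ^ n`. The resulting vectors cannot shatter `k + 1` positions, even after their
values have been merged into `k + 1` intervals.

Let `F` be such a set of vectors and consider the matrix whose columns are the lines in coordinate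
directions, whose rows are the `m` values, and whose `1`-entries mark the points of `F`. Merge the
values into `k + 1` intervals: the lines meeting all of them become lines of the grid `[k + 1] ^ n`
that are full, and the density bound for one-inclusion graphs, extended from two to `k + 1` colours,
shows that there are at most `k * #F` of them. Hence the matrix contains no
`(k * #F + 1, k + 1)`-formation, and Nivasch's recurrences bound the number of its `1`-entries by
`ζ * (k * #F * m + number of columns)` with `ζ = 2 ^ (α(n) ^ t / t! + O(α(n) ^ (t - 1)))`. So as
long as more than `2 * ζ * k * m` coordinates remain, some coordinate is determined by the others up
to `2 * ζ` values on average, and can be deleted at the cost of this factor.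

The vectors on the remaining positions are given by the restrictions of the permutations, up to a
factor exponential in the number of positions and intervals. For `q = 4 * ζ * k * K` with
`K = α(n) + 1` at most `n / K` positions remain, and the argument is repeated for the restrictions.
A round on `n` positions costs `(2 * ζ * q) ^ n = (ζ ^ 2 * O(K)) ^ n`, up to `2 ^ O(n)`; the factor
`ζ ^ 2` is the source of the constant `2 / t!`, and since the number of positions decreases
geometrically with ratio `1 / K`, all later rounds only contribute to the lower-order term.
-/

open Finset Function

/-! ## Matrices without formations -/

section Formations

variable {ρ σ γ : Type*} {s B : ℕ} {C C' : Finset γ}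

/-- The matrix with columns `C`, whose column `c` has its `1`-entries in the rows `S c`, contains
no `(B + 1, s)`-formation. The division of the rows into intervals is given by the fibers of a
monotone map `g`, of which only those over `0, …, s - 1` matter. -/
def FormationFree [Preorder ρ] (s B : ℕ) (C : Finset γ) (S : γ → Finset ρ) : Prop :=
  ∀ g : ρ → ℕ, Monotone g → ∀ D ⊆ C, (∀ c ∈ D, ∀ i < s, ∃ v ∈ S c, g v = i) → #D ≤ B

namespace FormationFree

section Preorder

variable [Preorder ρ] {S S' : γ → Finset ρ}

theorem mono (h : FormationFree s B C S) (hC : C' ⊆ C) (hS : ∀ c ∈ C', S' c ⊆ S c) :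
    FormationFree s B C' S' := by
  intro g hg D hD hfull
  refine h g hg D (hD.trans hC) fun c hc i hi => ?_
  obtain ⟨v, hv, hgv⟩ := hfull c hc i hi
  exact ⟨v, hS c (hD hc) hv, hgv⟩

theorem image [Preorder σ] [DecidableEq σ] (h : FormationFree s B C S) {G : ρ → σ}
    (hG : Monotone G) : FormationFree s B C fun c => (S c).image G := by
  intro g hg D hD hfull
  refine h (g ∘ G) (hg.comp hG) D hD fun c hc i hi => ?_
  simpa using hfull c hc i hi

theorem of_upperSet (h : FormationFree (s + 1) B C S) {U : Set ρ} (hU : IsUpperSet U)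
    (hC : C' ⊆ C) (hS : ∀ c ∈ C', S' c ⊆ S c) (hdisj : ∀ c ∈ C', ∀ v ∈ S' c, v ∉ U)
    (hmeet : ∀ c ∈ C', ∃ u ∈ S c, u ∈ U) : FormationFree s B C' S' := by
  classical
  intro g hg D hD hfull
  refine h (fun v => if v ∈ U then s else min (g v) s) ?_ D (hD.trans hC) fun c hc i hi => ?_
  · intro v w hvw
    have := hg hvw
    have := @hU v w hvw
    dsimp only
    split_ifs <;> first | omega | tauto
  · rcases Nat.lt_succ_iff_lt_or_eq.mp hi with hi | rfl
    · obtain ⟨v, hv, hgv⟩ := hfull c hc i hi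
      exact ⟨v, hS c (hD hc) hv, by rw [if_neg (hdisj c (hD hc) v hv)]; omega⟩
    · obtain ⟨u, hu, huU⟩ := hmeet c (hD hc)
      exact ⟨u, hu, if_pos huU⟩

theorem of_lowerSet (h : FormationFree (s + 1) B C S) {L : Set ρ} (hL : IsLowerSet L)
    (hC : C' ⊆ C) (hS : ∀ c ∈ C', S' c ⊆ S c) (hdisj : ∀ c ∈ C', ∀ v ∈ S' c, v ∉ L)
    (hmeet : ∀ c ∈ C', ∃ u ∈ S c, u ∈ L) : FormationFree s B C' S' := by
  classical
  intro g hg D hD hfull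
  refine h (fun v => if v ∈ L then 0 else g v + 1) ?_ D (hD.trans hC) fun c hc i hi => ?_
  · intro v w hvw
    have := hg hvw
    have := @hL w v hvw
    dsimp only
    split_ifs <;> first | omega | tauto
  · rcases i with _ | i
    · obtain ⟨u, hu, huL⟩ := hmeet c (hD hc)
      exact ⟨u, hu, if_pos huL⟩
    · obtain ⟨v, hv, hgv⟩ := hfull c hc i (by omega)
      exact ⟨v, hS c (hD hc) hv, by rw [if_neg (hdisj c (hD hc) v hv), hgv]⟩

theorem card_nonempty_le [DecidablePred fun c => (S c).Nonempty] (h : FormationFree s B C S)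
    (hs : s ≤ 1) : #{c ∈ C | (S c).Nonempty} ≤ B := by
  refine h (fun _ => 0) monotone_const _ (filter_subset _ _) fun c hc i hi => ?_
  obtain ⟨v, hv⟩ := (mem_filter.mp hc).2
  exact ⟨v, hv, by omega⟩

end Preorder

end FormationFree

/-- An upper bound, linear in the number of rows and in the number of columns, for the number of
`1`-entries of a matrix that has at most `m` rows and contains no `(B + 1, s)`-formation. The
coefficient of the number of columns must not depend on `B`. -/
def FormationBound (γ : Type*) (s m P Q : ℕ) : Prop :=
  ∀ (B : ℕ) (R : Finset ℕ) (C : Finset γ) (S : γ → Finset ℕ), #R ≤ m → (∀ c ∈ C, S c ⊆ R) →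
    FormationFree s B C S → ∑ c ∈ C, #(S c) ≤ P * B * #R + Q * #C

theorem FormationBound.mono {m m' P P' Q Q' : ℕ} (h : FormationBound γ s m P Q) (hm : m' ≤ m)
    (hP : P ≤ P') (hQ : Q ≤ Q') : FormationBound γ s m' P' Q' := by
  intro B R C S hR hS hfree
  refine (h B R C S (hR.trans hm) hS hfree).trans ?_
  gcongr

theorem formationBound_of_le_one {m P Q : ℕ} (hs : s ≤ 1) (hP : 1 ≤ P) :
    FormationBound γ s m P Q := by
  classical
  intro B R C S _ hS hfree
  calc ∑ c ∈ C, #(S c) = ∑ c ∈ C with (S c).Nonempty, #(S c) :=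
        (sum_filter_of_ne fun c _ hc => card_ne_zero.mp hc).symm
    _ ≤ #{c ∈ C | (S c).Nonempty} * #R :=
        sum_le_card_nsmul _ _ _ fun c hc => card_le_card (hS c (mem_filter.mp hc).1)
    _ ≤ P * B * #R := by
        gcongr
        exact (hfree.card_nonempty_le hs).trans (Nat.le_mul_of_pos_left B hP)
    _ ≤ P * B * #R + Q * #C := Nat.le_add_right _ _

theorem formationBound_of_le {m P Q : ℕ} (hm : m ≤ Q) : FormationBound γ s m P Q := by
  intro B R C S hR hS _
  calc ∑ c ∈ C, #(S c) ≤ #C * Q :=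
        sum_le_card_nsmul _ _ _ fun c hc => (card_le_card (hS c hc)).trans (hR.trans hm)
    _ ≤ P * B * #R + Q * #C := by rw [mul_comm]; exact Nat.le_add_left _ _

theorem exists_monotone_blocks (R : Finset ℕ) {W b : ℕ} (hW : 0 < W) (hb : #R ≤ b * W) :
    ∃ G : ℕ → ℕ, Monotone G ∧ (∀ v ∈ R, G v < b) ∧ ∀ i, #{v ∈ R | G v = i} ≤ W := by
  set rank : ℕ → ℕ := Nat.count (· ∈ R)
  have hrank : Set.InjOn rank R := fun v hv w hw => Nat.count_injective hv hw
  refine ⟨fun v => rank v / W, fun v w hvw => Nat.div_le_div_right (Nat.count_monotone _ hvw),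
    fun v hv => ?_, fun i => ?_⟩
  · have hlt : rank v < #R := by
      have := Nat.count_lt_card (p := (· ∈ R)) (by simp) hv
      simpa using this
    exact (Nat.div_lt_iff_lt_mul hW).mpr (hlt.trans_le hb)
  · calc #{v ∈ R | rank v / W = i} ≤ #(Ico (i * W) ((i + 1) * W)) := by
          refine card_le_card_of_injOn rank (fun v hv => ?_)
            (hrank.mono (coe_subset.mpr (filter_subset _ _)))
          obtain ⟨_, rfl⟩ := mem_filter.mp hv
          exact mem_coe.mpr (mem_Ico.mpr
            ⟨Nat.div_mul_le_self _ _, Nat.lt_mul_of_div_lt (Nat.lt_succ_self _) hW⟩)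
      _ = W := by rw [Nat.card_Ico, Nat.succ_mul, Nat.add_sub_cancel_left]

/-- The number of sides (below, above) of `i` on which the set `T` has no element. If `T` is the set
of blocks of rows met by a column, then a column meeting the block `i` can only complete `s`
intervals inside this block to an `(s + 2)`-formation if `freeSides T i = 0`. -/
def freeSides (T : Finset ℕ) (i : ℕ) : ℕ :=
  (if ∃ j ∈ T, j < i then 0 else 1) + (if ∃ j ∈ T, i < j then 0 else 1)

theorem sum_freeSides_le_of_card_le_one (q : ℕ → ℕ) {T : Finset ℕ} (hT : #T ≤ 1) :
    ∑ i ∈ T, q (freeSides T i) ≤ q 2 := by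
  rcases Nat.le_one_iff_eq_zero_or_eq_one.mp hT with hT | hT
  · simp [card_eq_zero.mp hT]
  · obtain ⟨i, rfl⟩ := card_eq_one.mp hT
    simp [freeSides]

theorem sum_freeSides_le (q : ℕ → ℕ) {T : Finset ℕ} (hT : 1 < #T) :
    ∑ i ∈ T, q (freeSides T i) ≤ 2 * q 1 + q 0 * #T := by
  have hne : T.Nonempty := card_pos.mp (by omega)
  have hlt : T.min' hne < T.max' hne := min'_lt_max'_of_card T hT
  have hpoint : ∀ i ∈ T, q (freeSides T i) ≤
      (if i = T.min' hne then q 1 else 0) + (if i = T.max' hne then q 1 else 0) + q 0 := by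
    intro i hi
    have hbelow : (∃ j ∈ T, j < i) ↔ i ≠ T.min' hne :=
      ⟨fun ⟨j, hj, hji⟩ h => (T.min'_le j hj).not_gt (h ▸ hji),
        fun h => ⟨_, T.min'_mem hne, (T.min'_le i hi).lt_of_ne h.symm⟩⟩
    have habove : (∃ j ∈ T, i < j) ↔ i ≠ T.max' hne :=
      ⟨fun ⟨j, hj, hij⟩ h => (T.le_max' j hj).not_gt (h ▸ hij),
        fun h => ⟨_, T.max'_mem hne, (T.le_max' i hi).lt_of_ne h⟩⟩
    simp only [freeSides, hbelow, habove]
    by_cases hmin : i = T.min' hne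
    · simp [hmin, hlt.ne]
    · by_cases hmax : i = T.max' hne <;> simp [hmin, hmax, hlt.ne']
  calc ∑ i ∈ T, q (freeSides T i) ≤ _ := sum_le_sum hpoint
    _ = 2 * q 1 + q 0 * #T := by
      simp only [sum_add_distrib, sum_ite_eq', min'_mem, max'_mem, if_true, sum_const, smul_eq_mul]
      ring

section Blocks

variable {W : ℕ} {P Q : ℕ → ℕ} {R : Finset ℕ} {S : γ → Finset ℕ} {G : ℕ → ℕ}

theorem FormationFree.filter_block (hfree : FormationFree (s + 2) B C S) (hG : Monotone G) (i : ℕ)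
    (hC : C' ⊆ C) {p q : Prop} [Decidable p] [Decidable q]
    (hbelow : ∀ c ∈ C', (∃ j ∈ (S c).image G, j < i) ↔ p)
    (habove : ∀ c ∈ C', (∃ j ∈ (S c).image G, i < j) ↔ q) :
    FormationFree (s + ((if p then 0 else 1) + (if q then 0 else 1))) B C'
      fun c => {v ∈ S c | G v = i} := by
  simp only [exists_mem_image] at hbelow habove
  have hlower : IsLowerSet {v | G v < i} := fun v w hwv (hv : G v < i) => (hG hwv).trans_lt hv
  have hupper : IsUpperSet {v | i < G v} := fun v w hvw (hv : i < G v) => hv.trans_le (hG hvw)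
  have hle : FormationFree (s + (if q then 0 else 1) + 1) B C' fun c => {v ∈ S c | G v ≤ i} := by
    split_ifs with hq
    · exact of_upperSet hfree hupper hC (fun c _ => filter_subset _ _)
        (fun c _ v hv => not_lt.mpr (mem_filter.mp hv).2) fun c hc => (habove c hc).mpr hq
    · exact hfree.mono hC fun c _ => filter_subset _ _
  have hsub (c : γ) : {v ∈ S c | G v = i} ⊆ {v ∈ S c | G v ≤ i} :=
    monotone_filter_right _ fun v _ hv => hv.le
  rw [add_comm (if p then 0 else 1), ← add_assoc]
  by_cases hp : p
  · rw [if_pos hp, add_zero]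
    refine of_lowerSet hle hlower subset_rfl (fun c _ => hsub c)
      (fun c _ v hv => not_lt.mpr (mem_filter.mp hv).2.ge) fun c hc => ?_
    obtain ⟨v, hv, hvi⟩ := (hbelow c hc).mpr hp
    exact ⟨v, mem_filter.mpr ⟨hv, hvi.le⟩, hvi⟩
  · rw [if_neg hp]
    exact hle.mono subset_rfl fun c _ => hsub c

theorem FormationBound.sum_card_block_le (h : ∀ r ≤ s + 2, FormationBound γ r W (P r) (Q r))
    (hS : ∀ c ∈ C, S c ⊆ R) (hfree : FormationFree (s + 2) B C S) (hG : Monotone G) {i : ℕ}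
    (hW : #{v ∈ R | G v = i} ≤ W) :
    ∑ c ∈ C with i ∈ (S c).image G, #{v ∈ S c | G v = i} ≤
      (P (s + 2) + 2 * P (s + 1) + P s) * B * #{v ∈ R | G v = i} +
        ∑ c ∈ C with i ∈ (S c).image G, Q (s + freeSides ((S c).image G) i) := by
  set sides : γ → Bool × Bool := fun c =>
    (decide (∃ j ∈ (S c).image G, j < i), decide (∃ j ∈ (S c).image G, i < j)) with hsides
  set free : Bool × Bool → ℕ := fun x => (if x.1 then 0 else 1) + (if x.2 then 0 else 1) with hfr
  have hclass (x : Bool × Bool) :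
      ∑ c ∈ {c ∈ C | i ∈ (S c).image G} with sides c = x, #{v ∈ S c | G v = i} ≤
        P (s + free x) * B * #{v ∈ R | G v = i} +
          ∑ c ∈ {c ∈ C | i ∈ (S c).image G} with sides c = x,
            Q (s + freeSides ((S c).image G) i) := by
    have hx : ∀ c ∈ {c ∈ {c ∈ C | i ∈ (S c).image G} | sides c = x},
        c ∈ C ∧ ((∃ j ∈ (S c).image G, j < i) ↔ x.1) ∧ ((∃ j ∈ (S c).image G, i < j) ↔ x.2) := by
      intro c hc
      obtain ⟨hcC, rfl⟩ := mem_filter.mp hc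
      exact ⟨(mem_filter.mp hcC).1, by simp [hsides]⟩
    have hle : free x ≤ 2 := by simp only [hfr]; split_ifs <;> simp
    refine (h _ (Nat.add_le_add_left hle s) B {v ∈ R | G v = i} _ _ hW
      (fun c hc => filter_subset_filter _ (hS c (hx c hc).1))
      (hfree.filter_block hG i (fun c hc => (hx c hc).1) (fun c hc => (hx c hc).2.1)
        fun c hc => (hx c hc).2.2)).trans_eq ?_
    rw [mul_comm (Q _), ← smul_eq_mul #_, ← sum_const]
    congr 1
    refine sum_congr rfl fun c hc => ?_
    simp only [freeSides, (hx c hc).2, hfr]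
  rw [← sum_fiberwise _ sides, ← sum_fiberwise _ sides (fun c => Q _)]
  refine (sum_le_sum fun x _ => hclass x).trans_eq ?_
  rw [sum_add_distrib]
  congr 1
  simp only [hfr, Fintype.sum_prod_type, Fintype.sum_bool, Bool.false_eq_true, if_true, if_false,
    Nat.reduceAdd, add_zero]
  ring

theorem FormationBound.sum_card_le (h : ∀ r ≤ s + 2, FormationBound γ r W (P r) (Q r))
    (hS : ∀ c ∈ C, S c ⊆ R) (hfree : FormationFree (s + 2) B C S) (hG : Monotone G) {b : ℕ}
    (hb : ∀ v ∈ R, G v < b) (hW : ∀ i, #{v ∈ R | G v = i} ≤ W) :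
    ∑ c ∈ C, #(S c) ≤ (P (s + 2) + 2 * P (s + 1) + P s) * B * #R +
      ∑ c ∈ C, ∑ i ∈ (S c).image G, Q (s + freeSides ((S c).image G) i) := by
  have hGR : ∀ v ∈ R, G v ∈ range b := fun v hv => mem_range.mpr (hb v hv)
  have hswap (f : γ → ℕ → ℕ) : ∑ c ∈ C, ∑ i ∈ (S c).image G, f c i =
      ∑ i ∈ range b, ∑ c ∈ C with i ∈ (S c).image G, f c i := by
    refine sum_comm' fun c i => ?_
    simp only [mem_filter]
    refine ⟨fun ⟨hc, hi⟩ => ⟨⟨hc, hi⟩, ?_⟩, fun ⟨⟨hc, hi⟩, _⟩ => ⟨hc, hi⟩⟩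
    obtain ⟨v, hv, rfl⟩ := mem_image.mp hi
    exact hGR v (hS c hc hv)
  calc ∑ c ∈ C, #(S c) = ∑ c ∈ C, ∑ i ∈ (S c).image G, #{v ∈ S c | G v = i} :=
        sum_congr rfl fun c _ => card_eq_sum_card_image G (S c)
    _ = ∑ i ∈ range b, ∑ c ∈ C with i ∈ (S c).image G, #{v ∈ S c | G v = i} := hswap _
    _ ≤ ∑ i ∈ range b, ((P (s + 2) + 2 * P (s + 1) + P s) * B * #{v ∈ R | G v = i} +
          ∑ c ∈ C with i ∈ (S c).image G, Q (s + freeSides ((S c).image G) i)) :=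
        sum_le_sum fun i _ => sum_card_block_le h hS hfree hG (hW i)
    _ = _ := by
        rw [sum_add_distrib, ← mul_sum, ← card_eq_sum_card_fiberwise hGR, hswap]

/-- A column meeting only one block loses nothing; the blocks met by the others are counted by
contracting every block to a single row. -/
theorem FormationBound.sum_sum_freeSides_le {N b p q : ℕ} (hcontr : FormationBound γ (s + 2) N p q)
    (hS : ∀ c ∈ C, S c ⊆ R) (hfree : FormationFree (s + 2) B C S) (hG : Monotone G)
    (hb : ∀ v ∈ R, G v < b) (hbN : b ≤ N) (hq : 2 * Q (s + 1) + Q s * q ≤ Q (s + 2)) :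
    ∑ c ∈ C, ∑ i ∈ (S c).image G, Q (s + freeSides ((S c).image G) i) ≤
      Q (s + 2) * #C + Q s * p * B * b := by
  set T : γ → Finset ℕ := fun c => (S c).image G
  set Cglobal : Finset γ := {c ∈ C | 1 < #(T c)}
  have hcount : ∑ c ∈ Cglobal, #(T c) ≤ p * B * b + q * #Cglobal := by
    have hTb : ∀ c ∈ Cglobal, T c ⊆ range b := fun c hc =>
      image_subset_iff.mpr fun v hv => mem_range.mpr (hb v (hS c (mem_filter.mp hc).1 hv))
    simpa using hcontr B (range b) Cglobal T (by simpa using hbN) hTb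
      ((hfree.image hG).mono (filter_subset _ _) fun _ _ => subset_rfl)
  have hglobal : ∑ c ∈ Cglobal, ∑ i ∈ T c, Q (s + freeSides (T c) i) ≤
      Q (s + 2) * #Cglobal + Q s * p * B * b :=
    calc ∑ c ∈ Cglobal, ∑ i ∈ T c, Q (s + freeSides (T c) i)
        ≤ ∑ c ∈ Cglobal, (2 * Q (s + 1) + Q s * #(T c)) :=
          sum_le_sum fun c hc =>
            sum_freeSides_le (fun f => Q (s + f)) (mem_filter.mp hc).2
      _ = 2 * Q (s + 1) * #Cglobal + Q s * ∑ c ∈ Cglobal, #(T c) := by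
          rw [sum_add_distrib, sum_const, ← mul_sum, smul_eq_mul, mul_comm #Cglobal]
      _ ≤ 2 * Q (s + 1) * #Cglobal + Q s * (p * B * b + q * #Cglobal) := by gcongr
      _ = (2 * Q (s + 1) + Q s * q) * #Cglobal + Q s * p * B * b := by ring
      _ ≤ Q (s + 2) * #Cglobal + Q s * p * B * b := by gcongr
  have hlocal : ∑ c ∈ C with ¬1 < #(T c), ∑ i ∈ T c, Q (s + freeSides (T c) i) ≤
      Q (s + 2) * #{c ∈ C | ¬1 < #(T c)} := by
    rw [mul_comm]
    exact sum_le_card_nsmul _ _ _ fun c hc =>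
      sum_freeSides_le_of_card_le_one (fun f => Q (s + f)) (not_lt.mp (mem_filter.mp hc).2)
  calc ∑ c ∈ C, ∑ i ∈ T c, Q (s + freeSides (T c) i)
      = ∑ c ∈ Cglobal, ∑ i ∈ T c, Q (s + freeSides (T c) i) +
          ∑ c ∈ C with ¬1 < #(T c), ∑ i ∈ T c, Q (s + freeSides (T c) i) :=
        (sum_filter_add_sum_filter_not _ _ _).symm
    _ ≤ Q (s + 2) * #Cglobal + Q s * p * B * b + Q (s + 2) * #{c ∈ C | ¬1 < #(T c)} :=
        add_le_add hglobal hlocal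
    _ = Q (s + 2) * #C + Q s * p * B * b := by
        rw [← card_filter_add_card_filter_not (s := C) fun c => 1 < #(T c)]
        ring

end Blocks

/-- The recursion of Nivasch: the rows are divided into blocks of `W` rows. -/
theorem FormationBound.step {W N M p q r : ℕ} {P Q : ℕ → ℕ} (hW : 0 < W)
    (h : ∀ r ≤ s + 2, FormationBound γ r W (P r) (Q r))
    (hcontr : FormationBound γ (s + 2) N p q) (hM : M ≤ N * W)
    (hq : 2 * Q (s + 1) + Q s * q ≤ Q (s + 2)) (hr : 2 * Q s * p ≤ r * W) :
    FormationBound γ (s + 2) M (P (s + 2) + 2 * P (s + 1) + P s + r) (Q (s + 2)) := by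
  intro B R C S hR hS hfree
  rcases le_or_gt #R W with hRW | hWR
  · exact (h _ le_rfl).mono le_rfl (by omega) le_rfl B R C S hRW hS hfree
  · obtain ⟨b, hRb, hbR⟩ : ∃ b, #R ≤ b * W ∧ b * W < #R + W := by
      refine ⟨(#R + W - 1) / W, ?_, ?_⟩
      · have := Nat.lt_div_mul_add (a := #R + W - 1) hW
        omega
      · have := Nat.div_mul_le_self (#R + W - 1) W
        omega
    have hbN : b ≤ N := by
      by_contra! hNb
      have : N * W + W ≤ b * W := by rw [← Nat.succ_mul]; gcongr; exact hNb
      omega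
    have hcost : Q s * p * b ≤ r * #R := by
      refine Nat.le_of_mul_le_mul_right ?_ hW
      calc Q s * p * b * W = Q s * p * (b * W) := by ring
        _ ≤ Q s * p * (2 * #R) := Nat.mul_le_mul_left _ (by omega)
        _ = 2 * Q s * p * #R := by ring
        _ ≤ r * W * #R := by gcongr
        _ = r * #R * W := by ring
    obtain ⟨G, hG, hGb, hGW⟩ := exists_monotone_blocks R hW hRb
    calc ∑ c ∈ C, #(S c)
        ≤ (P (s + 2) + 2 * P (s + 1) + P s) * B * #R + (Q (s + 2) * #C + Q s * p * B * b) :=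
          (sum_card_le h hS hfree hG hGb hGW).trans <|
            Nat.add_le_add_left (hcontr.sum_sum_freeSides_le hS hfree hG hGb hbN hq) _
      _ = (P (s + 2) + 2 * P (s + 1) + P s) * B * #R + Q s * p * b * B + Q (s + 2) * #C := by ring
      _ ≤ (P (s + 2) + 2 * P (s + 1) + P s) * B * #R + r * #R * B + Q (s + 2) * #C := by gcongr
      _ = (P (s + 2) + 2 * P (s + 1) + P s + r) * B * #R + Q (s + 2) * #C := by ring

end Formations

/-! ## Ackermann-type bounds -/

/-- A version of the Ackermann function whose row `d` is inverse to `alphaHier (d + 1)`. -/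
def ackermannHier : ℕ → ℕ → ℕ
  | 0, j => 2 * j
  | _ + 1, 0 => 1
  | d + 1, j + 1 => ackermannHier d (ackermannHier (d + 1) j)

/-- The coefficient of the number of columns obtained from the coefficients `q` of the contracted
matrices; the recursion is the one of `FormationBound.step`. -/
def nextColCoeff (q : ℕ → ℕ) : ℕ → ℕ
  | 0 => 0
  | 1 => 0
  | 2 => 1
  | s + 3 => 2 * nextColCoeff q (s + 2) + nextColCoeff q (s + 1) * q (s + 3)

/-- The coefficient of the number of rows obtained from the coefficients `p` and `q` of the
contracted matrices; the recursion is the one of `FormationBound.step`. -/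
def nextRowCoeff (p q : ℕ → ℕ) : ℕ → ℕ
  | 0 => 1
  | 1 => 1
  | s + 2 => 2 * nextRowCoeff p q (s + 1) + nextRowCoeff p q s +
      2 * 2 ^ (s + 2) * nextColCoeff q s * p (s + 2)

/-- The coefficient of the number of columns for matrices with at most `ackermannHier d j ^ e`
rows. -/
def colCoeff (e : ℕ) : ℕ → ℕ → ℕ
  | 0 => fun _ => 2 ^ e
  | d + 1 => nextColCoeff (colCoeff e d)

/-- The coefficient of the number of rows for matrices with at most `ackermannHier d j ^ e` rows,
up to a factor polynomial in `j`. -/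
def rowCoeff (e : ℕ) : ℕ → ℕ → ℕ
  | 0 => 0
  | d + 1 => nextRowCoeff (rowCoeff e d) (colCoeff e d)

theorem one_le_ackermannHier_succ (d j : ℕ) : 1 ≤ ackermannHier (d + 1) j := by
  induction d generalizing j with
  | zero =>
    induction j with
    | zero => rw [ackermannHier]
    | succ j ih => rw [ackermannHier, ackermannHier]; omega
  | succ d ihd =>
    cases j with
    | zero => rw [ackermannHier]
    | succ j => rw [ackermannHier]; exact ihd _

theorem one_le_nextColCoeff (q : ℕ → ℕ) (s : ℕ) : 1 ≤ nextColCoeff q (s + 2) := by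
  induction s with
  | zero => rw [nextColCoeff]
  | succ s ih => rw [nextColCoeff]; omega

theorem nextColCoeff_monotone (q : ℕ → ℕ) : Monotone (nextColCoeff q) := by
  refine monotone_nat_of_le_succ fun s => ?_
  rcases s with _ | _ | s
  · exact le_rfl
  · exact zero_le_one
  · exact (Nat.le_mul_of_pos_left _ two_pos).trans (Nat.le_add_right _ _)

theorem nextColCoeff_add_two_ge (q : ℕ → ℕ) (s : ℕ) :
    2 * nextColCoeff q (s + 1) + nextColCoeff q s * q (s + 2) ≤ nextColCoeff q (s + 2) := by
  cases s with
  | zero => simp [nextColCoeff]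
  | succ s => rw [nextColCoeff]

theorem pow_add_one_gap (a b c s : ℕ) {x : ℕ} (hx : 1 ≤ x) :
    (2 * a + b + c) * x ^ (s + 2) + 2 * (a * x ^ (s + 1)) + b * x ^ s + c ≤
      (2 * a + b + c) * (x + 1) ^ (s + 2) := by
  have hs : x ^ s ≤ x ^ (s + 1) := Nat.pow_le_pow_right hx s.le_succ
  have hone : 1 ≤ x ^ (s + 1) := Nat.one_le_pow _ _ hx
  calc _ ≤ (2 * a + b + c) * x ^ (s + 2) + 2 * (a * x ^ (s + 1)) + b * x ^ (s + 1) +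
          c * x ^ (s + 1) := by
        gcongr
        exact Nat.le_mul_of_pos_right c hone
    _ = (2 * a + b + c) * ((x + 1) * x ^ (s + 1)) := by ring
    _ ≤ (2 * a + b + c) * ((x + 1) * (x + 1) ^ (s + 1)) := by gcongr; exact x.le_succ
    _ = _ := by rw [← pow_succ']

section Amplify

variable {γ : Type*} {e : ℕ} {p q a N : ℕ → ℕ}

theorem FormationBound.amplify_succ {j : ℕ} (ha : 1 ≤ a j) (hN : a (j + 1) ^ e ≤ N j * a j ^ e)
    {s : ℕ} (hs : s + 2 ≤ e) (hcontr : FormationBound γ (s + 2) (N j)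
      (p (s + 2) * (a j + 1) ^ (s + 2)) (q (s + 2)))
    (ih : ∀ r ≤ e, FormationBound γ r (a j ^ e) (nextRowCoeff p q r * (j + 1) ^ r)
      (nextColCoeff q r)) :
    FormationBound γ (s + 2) (a (j + 1) ^ e) (nextRowCoeff p q (s + 2) * (j + 2) ^ (s + 2))
      (nextColCoeff q (s + 2)) := by
  have hpow : (a j + 1) ^ (s + 2) ≤ 2 ^ (s + 2) * a j ^ e :=
    calc (a j + 1) ^ (s + 2) ≤ (2 * a j) ^ (s + 2) := Nat.pow_le_pow_left (by omega) _
      _ ≤ 2 ^ (s + 2) * a j ^ e := by rw [mul_pow]; gcongr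
  refine (FormationBound.step (r := 2 * 2 ^ (s + 2) * nextColCoeff q s * p (s + 2))
    (Nat.pow_pos ha) (fun r hr => ih r (hr.trans hs)) hcontr hN
    (nextColCoeff_add_two_ge q s) ?_).mono le_rfl ?_ le_rfl
  · calc 2 * nextColCoeff q s * (p (s + 2) * (a j + 1) ^ (s + 2))
        ≤ 2 * nextColCoeff q s * (p (s + 2) * (2 ^ (s + 2) * a j ^ e)) := by gcongr
      _ = 2 * 2 ^ (s + 2) * nextColCoeff q s * p (s + 2) * a j ^ e := by ring
  · rw [← mul_assoc 2]
    simpa only [nextRowCoeff, mul_assoc] using pow_add_one_gap (nextRowCoeff p q (s + 1))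
      (nextRowCoeff p q s) (2 * 2 ^ (s + 2) * nextColCoeff q s * p (s + 2)) s j.succ_pos

theorem FormationBound.amplify (ha0 : a 0 = 1) (ha : ∀ j, 1 ≤ a j)
    (hN : ∀ j, a (j + 1) ^ e ≤ N j * a j ^ e)
    (hcontr : ∀ j, ∀ s ≤ e, FormationBound γ s (N j) (p s * (a j + 1) ^ s) (q s)) (j : ℕ) :
    ∀ s ≤ e, FormationBound γ s (a j ^ e) (nextRowCoeff p q s * (j + 1) ^ s)
      (nextColCoeff q s) := by
  induction j with
  | zero =>
    rintro (_ | _ | s) _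
    · exact formationBound_of_le_one zero_le_one (by simp [nextRowCoeff])
    · exact formationBound_of_le_one le_rfl (by simp [nextRowCoeff])
    · exact formationBound_of_le (by simpa [ha0] using one_le_nextColCoeff q s)
  | succ j ih =>
    rintro (_ | _ | s) hs
    · exact formationBound_of_le_one zero_le_one (by simp [nextRowCoeff])
    · exact formationBound_of_le_one le_rfl (by simp [nextRowCoeff])
    · exact amplify_succ (ha j) (hN j) hs (hcontr j _ hs) ih

end Amplify

theorem formationBound_ackermannHier (γ : Type*) (e d j : ℕ) :
    ∀ s ≤ e, FormationBound γ s (ackermannHier (d + 1) j ^ e)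
      (rowCoeff e (d + 1) s * (j + 1) ^ s) (colCoeff e (d + 1) s) := by
  induction d generalizing j with
  | zero =>
    exact .amplify (N := fun _ => 2 ^ e) (by rw [ackermannHier]) (one_le_ackermannHier_succ 0)
      (fun j => by rw [ackermannHier, ackermannHier, mul_pow])
      (fun _ _ _ => formationBound_of_le le_rfl) j
  | succ d ih =>
    exact .amplify (N := fun j => ackermannHier (d + 1) (ackermannHier (d + 2) j) ^ e)
      (by rw [ackermannHier]) (one_le_ackermannHier_succ (d + 1))
      (fun j => by
        rw [ackermannHier]
        exact Nat.le_mul_of_pos_right _ (Nat.pow_pos (one_le_ackermannHier_succ _ j)))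
      (fun j => ih (ackermannHier (d + 2) j)) j

/-! ## The inverse Ackermann function -/

section InverseAckermann

variable {f : ℕ → ℕ}

theorem iterCount_le_pred (hf : ∀ m, 2 ≤ m → f m < m) (fuel m : ℕ) :
    iterCount f fuel m ≤ m - 1 := by
  induction fuel generalizing m with
  | zero => exact Nat.zero_le _
  | succ fuel ih =>
    rw [iterCount]
    split_ifs with hm
    · exact Nat.zero_le _
    · have := ih (f m)
      have := hf m (by omega)
      omega

theorem iterCount_add_two_lt (hf : ∀ m, 2 ≤ m → f m < m) {m : ℕ} (hm : 2 ≤ m)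
    (hfm : 4 ≤ f m) (hffm : f (f m) + 2 ≤ f m) : iterCount f m m < f m := by
  obtain ⟨u, rfl⟩ := Nat.exists_eq_add_of_le' hm
  rw [iterCount, if_neg (by omega), iterCount, if_neg (by omega)]
  have := iterCount_le_pred hf u (f (f (u + 2)))
  omega

theorem le_of_iterCount_le {g G : ℕ → ℕ} (hf : ∀ m, 2 ≤ m → f m < m)
    (hfg : ∀ m x, f m ≤ x → m ≤ g x) (hG : ∀ j, 1 ≤ G j) (hG_succ : ∀ j, G (j + 1) = g (G j))
    {fuel m j : ℕ} (hm : m ≤ fuel) (h : iterCount f fuel m ≤ j) : m ≤ G j := by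
  induction fuel generalizing m j with
  | zero => omega
  | succ fuel ih =>
    rw [iterCount] at h
    split_ifs at h with hm1
    · exact hm1.trans (hG j)
    · obtain ⟨j, rfl⟩ := Nat.exists_eq_succ_of_ne_zero (show j ≠ 0 by omega)
      have := hf m (by omega)
      rw [hG_succ]
      exact hfg _ _ (ih (by omega) (by omega))

theorem alphaHier_succ_lt (d m : ℕ) (hm : 2 ≤ m) : alphaHier (d + 1) m < m := by
  induction d generalizing m with
  | zero => rw [alphaHier]; omega
  | succ d ih =>
    have := iterCount_le_pred ih m m
    rw [alphaHier]
    omega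

theorem alphaHier_succ_add_two_le (d m : ℕ) (hm : 4 ≤ m) : alphaHier (d + 1) m + 2 ≤ m := by
  induction d generalizing m with
  | zero => rw [alphaHier]; omega
  | succ d ih =>
    have := ih m hm
    obtain ⟨u, rfl⟩ := Nat.exists_eq_add_of_le' (show 1 ≤ m by omega)
    have := iterCount_le_pred (alphaHier_succ_lt d) u (alphaHier (d + 1) (u + 1))
    rw [alphaHier, iterCount, if_neg (by omega)]
    omega

theorem le_ackermannHier_of_alphaHier_le (d m j : ℕ) (h : alphaHier (d + 1) m ≤ j) :
    m ≤ ackermannHier d j := by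
  induction d generalizing m j with
  | zero =>
    rw [alphaHier] at h
    rw [ackermannHier]
    omega
  | succ d ih =>
    rw [alphaHier] at h
    exact le_of_iterCount_le (alphaHier_succ_lt d) ih (one_le_ackermannHier_succ d)
      (fun j => by rw [ackermannHier]) le_rfl h

theorem exists_alphaHier_le_three (n : ℕ) : ∃ k, 1 ≤ k ∧ alphaHier k n ≤ 3 := by
  by_contra! hlarge
  have hdecr (j : ℕ) : alphaHier (j + 1) n + j ≤ n := by
    have hn := hlarge 1 le_rfl
    rw [alphaHier] at hn
    induction j with
    | zero => rw [alphaHier]; omega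
    | succ j ih =>
      have hj := hlarge (j + 1) j.succ_pos
      have := iterCount_add_two_lt (alphaHier_succ_lt j) (by omega) hj
        (alphaHier_succ_add_two_le j _ hj)
      rw [alphaHier]
      omega
  have := hdecr n
  have := hlarge (n + 1) n.succ_pos
  omega

theorem invAck_spec (n : ℕ) : 1 ≤ invAck n ∧ alphaHier (invAck n) n ≤ 3 :=
  Nat.sInf_mem (exists_alphaHier_le_three n)

theorem le_ackermannHier_invAck (n : ℕ) : n ≤ ackermannHier (invAck n - 2 + 1) 3 := by
  obtain ⟨hpos, hle⟩ := invAck_spec n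
  rcases hpos.eq_or_lt with hone | htwo
  · rw [← hone] at hle ⊢
    calc n ≤ ackermannHier 0 3 := le_ackermannHier_of_alphaHier_le 0 n 3 hle
      _ ≤ ackermannHier 1 3 := by simp [ackermannHier]
  · refine le_ackermannHier_of_alphaHier_le _ n 3 ?_
    rwa [Nat.sub_add_cancel htwo]

end InverseAckermann

/-! ## Growth of the coefficients -/

/-- The exponent `binom(d + u + 1, u + 1) + c * binom(d + u, u)`, which is
`d ^ (u + 1) / (u + 1)! + O(d ^ u)`. With binomial coefficients instead of powers, Pascal's rule
turns the recursion for the coefficients into an identity. -/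
def growthExponent (u c d : ℕ) : ℕ := (d + u + 1).choose (u + 1) + c * (d + u).choose u

/-- The class of functions bounded by `2 ^ (d ^ (u + 1) / (u + 1)! + O(d ^ u))`. -/
def ChooseGrowth (u : ℕ) (f : ℕ → ℕ) : Prop := ∃ c, ∀ d, f d ≤ 2 ^ growthExponent u c d

theorem growthExponent_mono (u d : ℕ) : Monotone fun c => growthExponent u c d :=
  fun _ _ h => Nat.add_le_add_left (Nat.mul_le_mul_right _ h) _

theorem growthExponent_add_le (u c b d : ℕ) :
    growthExponent u c d + b ≤ growthExponent u (c + b) d := by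
  have hpos : 0 < (d + u).choose u := Nat.choose_pos (Nat.le_add_left u d)
  calc growthExponent u c d + b ≤ growthExponent u c d + b * (d + u).choose u := by
        gcongr
        exact Nat.le_mul_of_pos_right b hpos
    _ = growthExponent u (c + b) d := by rw [growthExponent, growthExponent]; ring

theorem growthExponent_succ_succ (u c d : ℕ) :
    growthExponent (u + 1) c (d + 1) = growthExponent (u + 1) c d + growthExponent u c (d + 1) := by
  have hlead : (d + 1 + (u + 1) + 1).choose (u + 1 + 1) =
      (d + 1 + u + 1).choose (u + 1) + (d + (u + 1) + 1).choose (u + 1 + 1) := by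
    rw [Nat.choose_succ_succ' (d + 1 + (u + 1)) (u + 1)]
    congr 2; omega
  have hlow : (d + 1 + (u + 1)).choose (u + 1) =
      (d + 1 + u).choose u + (d + (u + 1)).choose (u + 1) := by
    rw [← add_assoc (d + 1), Nat.choose_succ_succ' (d + 1 + u) u]
    congr 2; omega
  rw [growthExponent, growthExponent, growthExponent, hlead, hlow]
  ring

namespace ChooseGrowth

variable {u : ℕ} {f g h : ℕ → ℕ}

theorem mono (hg : ChooseGrowth u g) (hfg : ∀ d, f d ≤ g d) : ChooseGrowth u f :=
  hg.imp fun _ hc d => (hfg d).trans (hc d)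

theorem add (hf : ChooseGrowth u f) (hg : ChooseGrowth u g) :
    ChooseGrowth u fun d => f d + g d := by
  obtain ⟨a, ha⟩ := hf
  obtain ⟨b, hb⟩ := hg
  refine ⟨max a b + 1, fun d => ?_⟩
  calc f d + g d ≤ 2 ^ growthExponent u (max a b) d + 2 ^ growthExponent u (max a b) d :=
        add_le_add
          ((ha d).trans (Nat.pow_le_pow_right two_pos (growthExponent_mono u d (le_max_left a b))))
          ((hb d).trans (Nat.pow_le_pow_right two_pos (growthExponent_mono u d (le_max_right a b))))
    _ = 2 ^ (growthExponent u (max a b) d + 1) := by ring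
    _ ≤ 2 ^ growthExponent u (max a b + 1) d :=
        Nat.pow_le_pow_right two_pos (growthExponent_add_le u _ 1 d)

theorem const_mul (hf : ChooseGrowth u f) (K : ℕ) : ChooseGrowth u fun d => K * f d := by
  obtain ⟨a, ha⟩ := hf
  refine ⟨a + K, fun d => ?_⟩
  calc K * f d ≤ 2 ^ K * 2 ^ growthExponent u a d :=
        Nat.mul_le_mul Nat.lt_two_pow_self.le (ha d)
    _ = 2 ^ (growthExponent u a d + K) := by ring
    _ ≤ 2 ^ growthExponent u (a + K) d :=
        Nat.pow_le_pow_right two_pos (growthExponent_add_le u a K d)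

theorem two_pow : ChooseGrowth 0 fun d => 2 ^ d :=
  ⟨0, fun d => Nat.pow_le_pow_right two_pos (by simp [growthExponent])⟩

theorem const (K : ℕ) : ChooseGrowth u fun _ => K :=
  ⟨K, fun d => Nat.lt_two_pow_self.le.trans <|
    Nat.pow_le_pow_right two_pos <| (Nat.le_add_left K _).trans (growthExponent_add_le u 0 K d)
      |>.trans_eq (by rw [zero_add])⟩

theorem of_recurrence (hf : ChooseGrowth u f) (hh : ChooseGrowth (u + 1) h)
    (hrec : ∀ d, g (d + 1) ≤ h (d + 1) + f (d + 1) * g d) : ChooseGrowth (u + 1) g := by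
  obtain ⟨a, ha⟩ := hf
  obtain ⟨b, hb⟩ := hh
  obtain ⟨c, hca, hcb, hc₀⟩ : ∃ c, a + 1 ≤ c ∧ b + 1 ≤ c ∧ g 0 ≤ c :=
    ⟨max a b + 1 + g 0, by omega, by omega, by omega⟩
  refine ⟨c, fun d => ?_⟩
  induction d with
  | zero =>
    calc g 0 ≤ c := hc₀
      _ ≤ 2 ^ c := Nat.lt_two_pow_self.le
      _ ≤ 2 ^ growthExponent (u + 1) c 0 :=
        Nat.pow_le_pow_right two_pos (by simp [growthExponent])
  | succ d ih =>
    set E := growthExponent (u + 1) c d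
    set F := growthExponent u a (d + 1)
    have hE : E + F + 1 ≤ growthExponent (u + 1) c (d + 1) := by
      rw [growthExponent_succ_succ, add_assoc]
      exact Nat.add_le_add_left ((growthExponent_add_le u a 1 _).trans
        (growthExponent_mono u _ hca)) _
    have hH : growthExponent (u + 1) b (d + 1) + 1 ≤ growthExponent (u + 1) c (d + 1) :=
      (growthExponent_add_le _ b 1 _).trans (growthExponent_mono _ _ hcb)
    obtain ⟨n, hn⟩ := Nat.exists_eq_add_of_le' ((Nat.le_add_left 1 _).trans hE)
    calc g (d + 1) ≤ h (d + 1) + f (d + 1) * g d := hrec d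
      _ ≤ 2 ^ growthExponent (u + 1) b (d + 1) + 2 ^ F * 2 ^ E :=
        add_le_add (hb _) (Nat.mul_le_mul (ha _) ih)
      _ ≤ 2 ^ n + 2 ^ n := by
        rw [← pow_add]
        gcongr <;> first | exact one_le_two | omega
      _ = 2 ^ growthExponent (u + 1) c (d + 1) := by rw [hn, pow_succ, mul_two]

end ChooseGrowth

theorem colCoeff_four (e d : ℕ) : colCoeff e d 4 = 2 ^ e + 4 * d := by
  induction d with
  | zero => rfl
  | succ d ih =>
    have hrec : colCoeff e (d + 1) 4 = 4 + colCoeff e d 4 := by simp [colCoeff, nextColCoeff]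
    omega

theorem colCoeff_five (e d : ℕ) :
    colCoeff e d 5 + (8 * d + 2 * 2 ^ e + 16) = (3 * 2 ^ e + 16) * 2 ^ d := by
  induction d with
  | zero => simp only [colCoeff]; ring
  | succ d ih =>
    have h4 := colCoeff_four e (d + 1)
    have hrec : colCoeff e (d + 1) 5 = 2 * colCoeff e (d + 1) 4 + 2 * colCoeff e d 5 := by
      simp [colCoeff, nextColCoeff]
    rw [pow_succ]
    linarith

theorem chooseGrowth_zero_colCoeff (e : ℕ) {s : ℕ} (hs : s ≤ 5) :
    ChooseGrowth 0 fun d => colCoeff e (d + 1) s := by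
  refine (ChooseGrowth.two_pow.const_mul ((3 * 2 ^ e + 16) * 2)).mono fun d => ?_
  calc colCoeff e (d + 1) s ≤ colCoeff e (d + 1) 5 := nextColCoeff_monotone _ hs
    _ ≤ (3 * 2 ^ e + 16) * 2 ^ (d + 1) := Nat.le.intro (colCoeff_five e (d + 1))
    _ = (3 * 2 ^ e + 16) * 2 * 2 ^ d := by ring

theorem chooseGrowth_colCoeff (e : ℕ) {u s : ℕ} (hs : s ≤ 2 * u + 5) :
    ChooseGrowth u fun d => colCoeff e (d + 1) s := by
  induction u generalizing s with
  | zero => exact chooseGrowth_zero_colCoeff e hs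
  | succ u ihu =>
    induction s using Nat.strong_induction_on with
    | h s ihs =>
      rcases s with _ | _ | _ | s
      · exact .const 0
      · exact .const 0
      · exact .const 1
      · exact (ihu (s := s + 1) (by omega)).of_recurrence
          ((ihs (s + 2) (by omega) (by omega)).const_mul 2) fun d => le_rfl

theorem chooseGrowth_rowCoeff (e : ℕ) {u s : ℕ} (hs : s ≤ 2 * u + 7) :
    ChooseGrowth (u + 1) fun d => rowCoeff e (d + 1) s := by
  induction s using Nat.strong_induction_on with
  | h s ihs =>
    rcases s with _ | _ | s
    · exact .const 1
    · exact .const 1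
    · have hcol := chooseGrowth_colCoeff e (u := u) (s := s) (by omega)
      exact (hcol.const_mul (2 * 2 ^ (s + 2))).of_recurrence
        (((ihs (s + 1) (by omega) (by omega)).const_mul 2).add (ihs s (by omega) (by omega)))
        fun d => le_rfl

theorem add_pow_succ_le {x a : ℝ} (hx : 0 ≤ x) (ha : 0 ≤ a) (n : ℕ) :
    (x + a) ^ (n + 1) ≤ x ^ (n + 1) + (n + 1) * a * (x + a) ^ n := by
  induction n with
  | zero => simp
  | succ n ih =>
    calc (x + a) ^ (n + 2) = x * (x + a) ^ (n + 1) + a * (x + a) ^ (n + 1) := by ring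
      _ ≤ x * (x ^ (n + 1) + (n + 1) * a * (x + a) ^ n) + a * (x + a) ^ (n + 1) := by gcongr
      _ = x ^ (n + 2) + (n + 1) * a * (x * (x + a) ^ n) + a * (x + a) ^ (n + 1) := by ring
      _ ≤ x ^ (n + 2) + (n + 1) * a * ((x + a) * (x + a) ^ n) + a * (x + a) ^ (n + 1) := by
        gcongr
        exact le_add_of_nonneg_right ha
      _ = x ^ (n + 2) + ((n + 1 : ℕ) + 1) * a * (x + a) ^ (n + 1) := by push_cast; ring

theorem cast_choose_le (u d : ℕ) {x : ℝ} (hdx : d + 1 ≤ x) :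
    ((d + u + 1).choose (u + 1) : ℝ) ≤
      x ^ (u + 1) / (u + 1).factorial + (u + 1) * u * (x + u) ^ u := by
  have hx : 0 ≤ x := le_trans (by positivity) hdx
  calc ((d + u + 1).choose (u + 1) : ℝ)
      ≤ ((d + u + 1 : ℕ) : ℝ) ^ (u + 1) / (u + 1).factorial := Nat.choose_le_pow_div _ _
    _ ≤ (x + u) ^ (u + 1) / (u + 1).factorial := by
      gcongr
      push_cast
      linarith
    _ ≤ (x ^ (u + 1) + (u + 1) * u * (x + u) ^ u) / (u + 1).factorial := by
      gcongr
      exact add_pow_succ_le hx u.cast_nonneg u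
    _ ≤ x ^ (u + 1) / (u + 1).factorial + (u + 1) * u * (x + u) ^ u := by
      rw [add_div]
      gcongr
      exact div_le_self (by positivity) (mod_cast Nat.one_le_iff_ne_zero.mpr (by positivity))

theorem exists_growthExponent_le (u c : ℕ) : ∃ C : ℝ, 0 ≤ C ∧ ∀ (d : ℕ) (x : ℝ), d + 1 ≤ x →
    (growthExponent u c d : ℝ) ≤ x ^ (u + 1) / (u + 1).factorial + C * x ^ u := by
  refine ⟨((u + 1) * u + c) * (u + 1) ^ u, by positivity, fun d x hdx => ?_⟩
  have hx : 1 ≤ x := le_trans (by simp) hdx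
  have hshift : (x + u) ^ u ≤ (u + 1) ^ u * x ^ u := by
    rw [← mul_pow]
    gcongr
    nlinarith [(Nat.cast_nonneg u : (0 : ℝ) ≤ u)]
  have hlow : ((d + u).choose u : ℝ) ≤ (x + u) ^ u := by
    calc ((d + u).choose u : ℝ) ≤ ((d + u : ℕ) : ℝ) ^ u := mod_cast Nat.choose_le_pow _ _
      _ ≤ (x + u) ^ u := by
        gcongr
        push_cast
        linarith
  calc (growthExponent u c d : ℝ)
      = ((d + u + 1).choose (u + 1) : ℝ) + c * ((d + u).choose u : ℝ) := by
        rw [growthExponent]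
        push_cast
        rfl
    _ ≤ x ^ (u + 1) / (u + 1).factorial + (u + 1) * u * (x + u) ^ u + c * (x + u) ^ u := by
        gcongr
        exact cast_choose_le u d hdx
    _ = x ^ (u + 1) / (u + 1).factorial + ((u + 1) * u + c) * (x + u) ^ u := by ring
    _ ≤ x ^ (u + 1) / (u + 1).factorial + ((u + 1) * u + c) * ((u + 1) ^ u * x ^ u) := by gcongr
    _ = x ^ (u + 1) / (u + 1).factorial + ((u + 1) * u + c) * (u + 1) ^ u * x ^ u := by ring

theorem exists_formationBound_invAck {t : ℕ} (ht : 2 ≤ t) :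
    ∃ C : ℝ, 0 ≤ C ∧ ∀ n : ℕ, ∃ ζ : ℕ, 1 ≤ ζ ∧
      (ζ : ℝ) ≤ 2 ^ ((invAck n : ℝ) ^ t / t.factorial + C * (invAck n : ℝ) ^ (t - 1)) ∧
      ∀ γ : Type*, FormationBound γ (2 * t + 3) n ζ ζ := by
  obtain ⟨u, rfl⟩ := Nat.exists_eq_add_of_le' ht
  set s := 2 * (u + 2) + 3
  obtain ⟨c, hc⟩ : ChooseGrowth (u + 1) fun d => 4 ^ s * rowCoeff s (d + 1) s +
      colCoeff s (d + 1) s :=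
    ((chooseGrowth_rowCoeff s (by omega)).const_mul _).add (chooseGrowth_colCoeff s (by omega))
  obtain ⟨C, hC, hexp⟩ := exists_growthExponent_le (u + 1) c
  refine ⟨C, hC, fun n => ⟨4 ^ s * rowCoeff s (invAck n - 2 + 1) s +
    colCoeff s (invAck n - 2 + 1) s, ?_, ?_, ?_⟩⟩
  · exact (one_le_nextColCoeff _ _).trans (Nat.le_add_left _ _)
  · have hα : ((invAck n - 2 : ℕ) : ℝ) + 1 ≤ invAck n := by
      have := (invAck_spec n).1
      exact_mod_cast (by omega : invAck n - 2 + 1 ≤ invAck n)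
    calc _ ≤ (2 : ℝ) ^ growthExponent (u + 1) c (invAck n - 2) := mod_cast hc _
      _ = (2 : ℝ) ^ (growthExponent (u + 1) c (invAck n - 2) : ℝ) := (Real.rpow_natCast _ _).symm
      _ ≤ _ := Real.rpow_le_rpow_of_exponent_le one_le_two (hexp _ _ hα)
  · intro γ
    have hn : n ≤ ackermannHier (invAck n - 2 + 1) 3 ^ s :=
      (le_ackermannHier_invAck n).trans (Nat.le_self_pow (by omega) _)
    refine (formationBound_ackermannHier γ s _ 3 s le_rfl).mono hn ?_ (Nat.le_add_left _ _)
    rw [mul_comm]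
    exact Nat.le_add_right _ _

/-! ## Full lines in families of bounded dimension -/

theorem sum_range_card_filter_lt {α : Type*} (s : Finset α) {w : α → ℕ} {N : ℕ}
    (hw : ∀ x ∈ s, w x ≤ N) : ∑ b ∈ range N, #{x ∈ s | b < w x} = ∑ x ∈ s, w x := by
  simp only [card_filter]
  rw [sum_comm]
  refine sum_congr rfl fun x hx => ?_
  rw [← card_filter]
  calc #{b ∈ range N | b < w x} = #(range (w x)) := by
        congr 1
        ext b
        have := hw x hx
        simp only [mem_filter, mem_range]
        omega
    _ = w x := card_range _

section FullLines

variable {ι κ : Type*} {Y Z : Finset (ι → κ)} {A J : Finset ι} {i j : ι} {k : ℕ}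

/-- The coordinates `J` are shattered by `Y`: every pattern on `J` is realized. -/
def ShattersCoords (Y : Finset (ι → κ)) (J : Finset ι) : Prop :=
  ∀ σ : ι → κ, ∃ y ∈ Y, ∀ j ∈ J, y j = σ j

theorem ShattersCoords.mono (h : ShattersCoords Z J) (hZ : Z ⊆ Y) : ShattersCoords Y J :=
  fun σ => (h σ).imp fun _ hy => ⟨hZ hy.1, hy.2⟩

variable [Fintype ι] [DecidableEq ι] [Fintype κ] [DecidableEq κ]

/-- The points of `Y` on lines in direction `j` that are contained in `Y`. -/
def fullPoints (Y : Finset (ι → κ)) (j : ι) : Finset (ι → κ) :=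
  {y | ∀ a, update y j a ∈ Y}

/-- The number of points of `Y` on the line in direction `j` through `y`. -/
def lineCount (Y : Finset (ι → κ)) (j : ι) (y : ι → κ) : ℕ := #{a | update y j a ∈ Y}

/-- The union of the lines in direction `j` with more than `b` points of `Y`. These sets, for
`b < card κ`, replace `Y` by unions of lines of the same total size. -/
def lineLevel (Y : Finset (ι → κ)) (j : ι) (b : ℕ) : Finset (ι → κ) := {y | b < lineCount Y j y}

theorem mem_fullPoints {y : ι → κ} : y ∈ fullPoints Y j ↔ ∀ a, update y j a ∈ Y :=
  mem_filter_univ y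

theorem ShattersCoords.insert (h : ShattersCoords (fullPoints Y j) J) (hj : j ∉ J) :
    ShattersCoords Y (insert j J) := by
  intro σ
  obtain ⟨y, hy, hyσ⟩ := h σ
  refine ⟨update y j (σ j), mem_fullPoints.mp hy (σ j), fun i hi => ?_⟩
  rcases mem_insert.mp hi with rfl | hi
  · exact update_self _ _ _
  · exact (update_of_ne (ne_of_mem_of_not_mem hi hj) _ _).trans (hyσ i hi)

theorem ShattersCoords.of_lineLevel {b : ℕ} (h : ShattersCoords (lineLevel Y j b) J) (hj : j ∉ J) :
    ShattersCoords Y J := by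
  intro σ
  obtain ⟨y, hy, hyσ⟩ := h σ
  obtain ⟨a, ha⟩ := card_pos.mp ((Nat.zero_le b).trans_lt ((mem_filter_univ y).mp hy))
  exact ⟨_, (mem_filter_univ a).mp ha, fun i hi =>
    (update_of_ne (ne_of_mem_of_not_mem hi hj) _ _).trans (hyσ i hi)⟩

theorem sum_lineCount (Y : Finset (ι → κ)) (j : ι) :
    ∑ y, lineCount Y j y = Fintype.card κ * #Y := by
  calc ∑ y, lineCount Y j y = #{p : (ι → κ) × κ | update p.1 j p.2 ∈ Y} := by
        simp only [lineCount, card_filter, Fintype.sum_prod_type]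
    _ = #(univ ×ˢ Y) :=
        card_nbij' (fun p => (p.1 j, update p.1 j p.2)) (fun p => (update p.2 j p.1, p.2 j))
          (fun p hp => by simpa using hp) (fun p hp => by simpa using hp)
          (fun p _ => by simp) (fun p _ => by simp)
    _ = Fintype.card κ * #Y := card_product _ _

theorem sum_card_lineLevel (Y : Finset (ι → κ)) (j : ι) :
    ∑ b ∈ range (Fintype.card κ), #(lineLevel Y j b) = Fintype.card κ * #Y :=
  (sum_range_card_filter_lt univ fun _ _ => card_le_univ _).trans (sum_lineCount Y j)

theorem lineLevel_top {r : ℕ} (hr : Fintype.card κ = r + 1) (Y : Finset (ι → κ)) (j : ι) :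
    lineLevel Y j r = fullPoints Y j := by
  ext y
  rw [lineLevel, mem_filter_univ, mem_fullPoints, Nat.lt_iff_add_one_le, ← hr, lineCount,
    (card_le_univ _).ge_iff_eq', eq_comm, card_eq_iff_eq_univ, filter_eq_self]
  simp

theorem lineLevel_fullPoints_subset (hij : i ≠ j) (b : ℕ) :
    lineLevel (fullPoints Y i) j b ⊆ fullPoints (lineLevel Y j b) i := by
  intro y hy
  refine mem_fullPoints.mpr fun a => (mem_filter_univ _).mpr <|
    ((mem_filter_univ y).mp hy).trans_le <| card_le_card fun c hc => ?_
  rw [mem_filter_univ, mem_fullPoints] at hc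
  rw [mem_filter_univ, update_comm hij]
  exact hc a

theorem card_mul_sum_card_fullPoints_insert_le {r : ℕ} (hr : Fintype.card κ = r + 1)
    (Y : Finset (ι → κ)) (hj : j ∉ A) :
    Fintype.card κ * ∑ i ∈ insert j A, #(fullPoints Y i) ≤
      ∑ b ∈ range r, ∑ i ∈ A, #(fullPoints (lineLevel Y j b) i) +
        (∑ i ∈ A, #(fullPoints (fullPoints Y j) i) + Fintype.card κ * #(fullPoints Y j)) := by
  have hother : Fintype.card κ * ∑ i ∈ A, #(fullPoints Y i) ≤
      ∑ b ∈ range (r + 1), ∑ i ∈ A, #(fullPoints (lineLevel Y j b) i) := by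
    rw [sum_comm, mul_sum]
    refine sum_le_sum fun i hi => ?_
    rw [← sum_card_lineLevel _ j, hr]
    exact sum_le_sum fun b _ =>
      card_le_card (lineLevel_fullPoints_subset (ne_of_mem_of_not_mem hi hj) b)
  rw [sum_range_succ, lineLevel_top hr] at hother
  rw [sum_insert hj, mul_add]
  omega

/-- For two colours this is the bound on the density of one-inclusion graphs. In the induction on
the set of directions, `Y` is replaced by its sets `lineLevel Y j b`. -/
theorem sum_card_fullPoints_le (h : ∀ J ⊆ A, ShattersCoords Y J → #J ≤ k) :
    ∑ j ∈ A, #(fullPoints Y j) ≤ k * Fintype.card κ * #Y := by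
  induction A using Finset.induction_on generalizing k Y with
  | empty => simp
  | insert j A hj ih =>
    rcases isEmpty_or_nonempty κ with hκ | hκ
    · have : IsEmpty (ι → κ) := ⟨fun y => hκ.elim (y j)⟩
      simp [Finset.eq_empty_of_isEmpty]
    obtain ⟨r, hr⟩ := Nat.exists_eq_add_one_of_ne_zero (Fintype.card_ne_zero (α := κ))
    have hinsert {J : Finset ι} (hJ : J ⊆ A) (hshat : ShattersCoords (fullPoints Y j) J) :
        #J + 1 ≤ k := by
      have hjJ : j ∉ J := fun hjJ => hj (hJ hjJ)
      exact card_insert_of_notMem hjJ ▸ h _ (insert_subset_insert j hJ) (hshat.insert hjJ)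
    have hlow (b : ℕ) : ∑ i ∈ A, #(fullPoints (lineLevel Y j b) i) ≤
        k * Fintype.card κ * #(lineLevel Y j b) :=
      ih fun J hJ hshat => h J (hJ.trans (subset_insert j A))
        (hshat.of_lineLevel fun hjJ => hj (hJ hjJ))
    have htop : ∑ i ∈ A, #(fullPoints (fullPoints Y j) i) + Fintype.card κ * #(fullPoints Y j) ≤
        k * Fintype.card κ * #(fullPoints Y j) := by
      rcases k with - | k
      · have hempty : fullPoints Y j = ∅ := eq_empty_of_forall_notMem fun y hy =>
          absurd (hinsert (empty_subset A) fun _ => ⟨y, hy, by simp⟩) (by simp)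
        simp only [hempty]
        simp [fullPoints]
      · calc _ ≤ k * Fintype.card κ * #(fullPoints Y j) + Fintype.card κ * #(fullPoints Y j) := by
              gcongr
              exact ih fun J hJ hshat => Nat.le_of_succ_le_succ (hinsert hJ hshat)
          _ = _ := by ring
    refine Nat.le_of_mul_le_mul_left ?_ (Fintype.card_pos (α := κ))
    calc Fintype.card κ * ∑ i ∈ insert j A, #(fullPoints Y i)
        ≤ ∑ b ∈ range r, k * Fintype.card κ * #(lineLevel Y j b) +
            k * Fintype.card κ * #(fullPoints Y j) :=
          (card_mul_sum_card_fullPoints_insert_le hr Y hj).trans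
            (add_le_add (sum_le_sum fun b _ => hlow b) htop)
      _ = k * Fintype.card κ * ∑ b ∈ range (Fintype.card κ), #(lineLevel Y j b) := by
          rw [← mul_sum, ← mul_add, ← lineLevel_top hr, ← sum_range_succ, ← hr]
      _ = Fintype.card κ * (k * Fintype.card κ * #Y) := by
          rw [sum_card_lineLevel]
          ring

end FullLines

section ColouredLines

variable {ι κ α : Type*} [Fintype ι] [DecidableEq ι] {A : Finset ι} {k : ℕ}

/-- Sum `sum_card_fullPoints_le` over the level sets of the weights. -/
theorem sum_sum_le_of_le_update [Fintype κ] {m : ι → (ι → κ) → ℕ} {w : (ι → κ) → ℕ}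
    (hmw : ∀ j ∈ A, ∀ y a, m j y ≤ w (update y j a))
    (h : ∀ J ⊆ A, ShattersCoords ({y | 0 < w y} : Finset (ι → κ)) J → #J ≤ k) :
    ∑ j ∈ A, ∑ y, m j y ≤ k * Fintype.card κ * ∑ y, w y := by
  classical
  have hw (y : ι → κ) : w y ≤ ∑ y, w y := single_le_sum_of_canonicallyOrdered (mem_univ y)
  have hm {j : ι} (hj : j ∈ A) (y : ι → κ) : m j y ≤ ∑ y, w y := by
    simpa using (hmw j hj y (y j)).trans (hw _)
  calc ∑ j ∈ A, ∑ y, m j y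
      = ∑ j ∈ A, ∑ b ∈ range (∑ y, w y), #{y | b < m j y} :=
        sum_congr rfl fun j hj => (sum_range_card_filter_lt _ fun y _ => hm hj y).symm
    _ ≤ ∑ j ∈ A, ∑ b ∈ range (∑ y, w y), #(fullPoints {y | b < w y} j) := by
        refine sum_le_sum fun j hj => sum_le_sum fun b _ => card_le_card fun y hy => ?_
        exact mem_fullPoints.mpr fun a => (mem_filter_univ _).mpr <|
          ((mem_filter_univ y).mp hy).trans_le (hmw j hj y a)
    _ = ∑ b ∈ range (∑ y, w y), ∑ j ∈ A, #(fullPoints {y | b < w y} j) := sum_comm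
    _ ≤ ∑ b ∈ range (∑ y, w y), k * Fintype.card κ * #{y | b < w y} :=
        sum_le_sum fun b _ => sum_card_fullPoints_le fun J hJ hshat => h J hJ <|
          hshat.mono <| monotone_filter_right _ fun y _ hy => (Nat.zero_le b).trans_lt hy
    _ = k * Fintype.card κ * ∑ y, w y := by
        rw [← mul_sum, sum_range_card_filter_lt _ fun y _ => hw y]

theorem card_filter_forall_ne [Fintype κ] [DecidableEq κ] (j : ι) (z : ι → κ) :
    #{y : ι → κ | ∀ i ≠ j, z i = y i} = Fintype.card κ := by
  calc #{y : ι → κ | ∀ i ≠ j, z i = y i} = #(univ.map ⟨update z j, update_injective z j⟩) := by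
        congr 1
        ext y
        simp [update_eq_iff]
    _ = Fintype.card κ := card_map _

/-- The direction-`j` lines are given by their points with `j`-th coordinate `a₀`. -/
theorem sum_card_colouredLines_le [Finite κ] [Nonempty κ] [DecidableEq κ] (g : α → κ)
    {F : Finset (ι → α)} {D : ι → Finset (ι → α)} {a₀ : α} (hD : ∀ j ∈ A, ∀ d ∈ D j, d j = a₀)
    (hfull : ∀ j ∈ A, ∀ d ∈ D j, ∀ a, ∃ v, g v = a ∧ update d j v ∈ F)
    (h : ∀ J ⊆ A, ShattersCoords (F.image (g ∘ ·)) J → #J ≤ k) :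
    ∑ j ∈ A, #(D j) ≤ k * #F := by
  classical
  cases nonempty_fintype κ
  have hcard : ∑ y, #{f ∈ F | g ∘ f = y} = #F :=
    (card_eq_sum_card_fiberwise fun f _ => mem_coe.mpr (mem_univ (g ∘ f))).symm
  have hlines (j : ι) : ∑ y : ι → κ, #{d ∈ D j | ∀ i ≠ j, g (d i) = y i} =
      Fintype.card κ * #(D j) := by
    simp only [card_filter]
    rw [sum_comm]
    simp only [← card_filter, card_filter_forall_ne, sum_const, smul_eq_mul, mul_comm]
  have hle : ∀ j ∈ A, ∀ (y : ι → κ) (a : κ),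
      #{d ∈ D j | ∀ i ≠ j, g (d i) = y i} ≤ #{f ∈ F | g ∘ f = update y j a} := by
    intro j hj y a
    have : Nonempty α := ⟨a₀⟩
    choose! v hv using fun d hd => hfull j hj d hd a
    refine card_le_card_of_injOn (fun d => update d j (v d)) (fun d hd => ?_)
      fun d hd d' hd' e => ?_
    · obtain ⟨hd, hdy⟩ := mem_filter.mp hd
      refine mem_filter.mpr ⟨(hv d hd).2, funext fun i => ?_⟩
      by_cases hi : i = j
      · subst hi
        simp [(hv d hd).1]
      · simp [hi, hdy i hi]
    · rw [← update_eq_self j d, ← update_eq_self j d', hD j hj d (mem_filter.mp hd).1,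
        hD j hj d' (mem_filter.mp hd').1]
      simpa using congrArg (update · j a₀) e
  have hsum := sum_sum_le_of_le_update hle fun J hJ hshat => h J hJ <| hshat.mono fun y hy => by
    obtain ⟨f, hf⟩ := card_pos.mp ((mem_filter_univ y).mp hy)
    exact mem_image.mpr ⟨f, mem_filter.mp hf⟩
  simp only [hlines, hcard, ← mul_sum] at hsum
  refine Nat.le_of_mul_le_mul_left (hsum.trans_eq ?_) (Fintype.card_pos (α := κ))
  ring

end ColouredLines

/-! ## Peeling off coordinates -/

section Peeling

variable {ι : Type*} [Fintype ι] [DecidableEq ι] {A : Finset ι} {F : Finset (ι → ℕ)} {k m ζ : ℕ}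

/-- A dimension for families of integer vectors: no more than `k` coordinates in `A` are shattered
after the values have been replaced by their classes in a division of `ℕ` into `k + 1` intervals,
which is given by the fibers of a monotone map. -/
def IntervalDimLE (A : Finset ι) (k : ℕ) (F : Finset (ι → ℕ)) : Prop :=
  ∀ g : ℕ → Fin (k + 1), Monotone g → ∀ J ⊆ A, ShattersCoords (F.image (g ∘ ·)) J → #J ≤ k

theorem card_filter_update_eq_le {j : ι} (hF : ∀ f ∈ F, f j < m) (y : ι → ℕ) (a : ℕ) :
    #{f ∈ F | update f j a = y} ≤ #{v ∈ range m | update y j v ∈ F} := by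
  have hf_eq {f : ι → ℕ} (hf : update f j a = y) : f = update y j (f j) := by simp [← hf]
  refine card_le_card_of_injOn (· j) (fun f hf => ?_) fun f hf f' hf' e => ?_
  · obtain ⟨hfF, hf⟩ := mem_filter.mp hf
    exact mem_filter.mpr ⟨mem_range.mpr (hF f hfF), hf_eq hf ▸ hfF⟩
  · rw [hf_eq (mem_filter.mp hf).2, hf_eq (mem_filter.mp hf').2]
    exact congrArg (update y j) e

theorem IntervalDimLE.formationFree (h : IntervalDimLE A k F) :
    FormationFree (k + 1) (k * #F) (A.sigma fun j => F.image (update · j 0))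
      fun c => {v ∈ range m | update c.2 c.1 v ∈ F} := by
  intro g hg D hD hfull
  let g' (v : ℕ) : Fin (k + 1) := ⟨min (g v) k, by omega⟩
  let D' (j : ι) : Finset (ι → ℕ) := {d ∈ F.image (update · j 0) | ⟨j, d⟩ ∈ D}
  have hD' : D = A.sigma D' := by
    ext ⟨j, d⟩
    have := @hD ⟨j, d⟩
    simp only [mem_sigma] at this
    simp only [mem_sigma, D', mem_filter]
    tauto
  rw [hD', card_sigma]
  refine sum_card_colouredLines_le g' (a₀ := 0) (fun j _ d hd => ?_) (fun j _ d hd i => ?_)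
    (h g' fun v w hvw => Fin.mk_le_mk.mpr (min_le_min_right k (hg hvw)))
  · obtain ⟨f, -, rfl⟩ := mem_image.mp (mem_filter.mp hd).1
    exact update_self _ _ _
  · obtain ⟨v, hv, hgv⟩ := hfull _ (mem_filter.mp hd).2 i i.isLt
    exact ⟨v, Fin.ext (by simp [g', hgv, Nat.le_of_lt_succ i.isLt]), (mem_filter.mp hv).2⟩

theorem IntervalDimLE.card_mul_card_le (h : IntervalDimLE A k F) (hF : ∀ f ∈ F, ∀ j ∈ A, f j < m)
    (hζ : FormationBound (Σ _ : ι, ι → ℕ) (k + 1) m ζ ζ) :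
    #A * #F ≤ ζ * (k * #F) * m + ζ * ∑ j ∈ A, #(F.image (update · j 0)) := by
  calc #A * #F = ∑ j ∈ A, ∑ y ∈ F.image (update · j 0), #{f ∈ F | update f j 0 = y} := by
        rw [← smul_eq_mul, ← sum_const]
        exact sum_congr rfl fun j _ =>
          card_eq_sum_card_fiberwise fun f hf => mem_coe.mpr (mem_image_of_mem _ hf)
    _ ≤ ∑ j ∈ A, ∑ y ∈ F.image (update · j 0), #{v ∈ range m | update y j v ∈ F} :=
        sum_le_sum fun j hj => sum_le_sum fun y _ =>
          card_filter_update_eq_le (fun f hf => hF f hf j hj) y 0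
    _ = ∑ c ∈ A.sigma fun j => F.image (update · j 0),
          #{v ∈ range m | update c.2 c.1 v ∈ F} := by rw [sum_sigma]
    _ ≤ ζ * (k * #F) * #(range m) + ζ * #(A.sigma fun j => F.image (update · j 0)) :=
        hζ _ _ _ _ (card_range m).le (fun _ _ => filter_subset _ _) h.formationFree
    _ = _ := by rw [card_range, card_sigma]

theorem IntervalDimLE.exists_card_le_mul_card_image_update (h : IntervalDimLE A k F)
    (hF : ∀ f ∈ F, ∀ j ∈ A, f j < m) (hζ : FormationBound (Σ _ : ι, ι → ℕ) (k + 1) m ζ ζ)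
    (hA : 2 * ζ * k * m < #A) : ∃ j ∈ A, #F ≤ 2 * ζ * #(F.image (update · j 0)) := by
  by_contra! hlt
  have hsum : 2 * ζ * ∑ j ∈ A, #(F.image (update · j 0)) < #A * #F := by
    rw [mul_sum, ← smul_eq_mul #A, ← sum_const]
    exact sum_lt_sum_of_nonempty (card_pos.mp (Nat.zero_lt_of_lt hA)) hlt
  have hle := h.card_mul_card_le hF hζ
  have hF' : 2 * ζ * k * m * #F ≤ #A * #F := by gcongr
  linarith

/-- The vectors in `F` with the coordinates outside `A` replaced by `0`. -/
def restrictCoords (A : Finset ι) (F : Finset (ι → ℕ)) : Finset (ι → ℕ) :=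
  F.image fun f => A.piecewise f 0

theorem restrictCoords_univ (F : Finset (ι → ℕ)) : restrictCoords univ F = F := by
  simp [restrictCoords]

theorem image_update_restrictCoords (A : Finset ι) (F : Finset (ι → ℕ)) (j : ι) :
    (restrictCoords A F).image (update · j 0) = restrictCoords (A.erase j) F := by
  simp only [restrictCoords, image_image]
  congr 1
  ext f i
  by_cases hij : i = j <;> simp [Finset.piecewise, hij]

theorem IntervalDimLE.restrict (h : IntervalDimLE univ k F) (A : Finset ι) :
    IntervalDimLE A k (restrictCoords A F) := by
  refine fun g hg J hJ hshat => h g hg J (subset_univ J) fun σ => ?_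
  obtain ⟨y, hy, hyσ⟩ := hshat σ
  obtain ⟨f, hf, rfl⟩ : ∃ f ∈ F, g ∘ A.piecewise f 0 = y := by
    simpa [restrictCoords] using hy
  exact ⟨g ∘ f, mem_image_of_mem _ hf, fun j hj => by simpa [hJ hj] using hyσ j hj⟩

/-- Greedy removal of coordinates that the remaining ones determine up to few values. -/
theorem IntervalDimLE.exists_card_restrictCoords_le (h : IntervalDimLE univ k F)
    (hF : ∀ f ∈ F, ∀ j, f j < m) (hζ₁ : 1 ≤ ζ)
    (hζ : FormationBound (Σ _ : ι, ι → ℕ) (k + 1) m ζ ζ) (A : Finset ι) :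
    ∃ A', #A' ≤ 2 * ζ * k * m ∧
      #(restrictCoords A F) ≤ (2 * ζ) ^ #A * #(restrictCoords A' F) := by
  induction hc : #A generalizing A with
  | zero => exact ⟨A, by omega, by simp⟩
  | succ c ih =>
    rcases le_or_gt #A (2 * ζ * k * m) with hA | hA
    · exact ⟨A, hA, Nat.le_mul_of_pos_left _ (by positivity)⟩
    have hlt : ∀ f ∈ restrictCoords A F, ∀ j ∈ A, f j < m := by
      simp only [restrictCoords, mem_image, forall_exists_index, and_imp]
      rintro _ f hf rfl j hj
      simpa [hj] using hF f hf j
    obtain ⟨j, hj, hcard⟩ := (h.restrict A).exists_card_le_mul_card_image_update hlt hζ hA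
    rw [image_update_restrictCoords] at hcard
    obtain ⟨A', hA', hle⟩ := ih (A.erase j) (by rw [card_erase_of_mem hj, hc, Nat.add_sub_cancel])
    refine ⟨A', hA', hcard.trans ?_⟩
    rw [pow_succ', mul_assoc (2 * ζ)]
    exact Nat.mul_le_mul_left _ hle

end Peeling

/-! ## Permutations -/

section Permutations

variable {n a k q m ζ : ℕ} {P : Finset (Equiv.Perm (Fin n))}

/-- The restriction of the permutation `π` to the tuple `e` of positions. -/
def permRestrict (π : Equiv.Perm (Fin n)) (e : Fin a → Fin n) : Equiv.Perm (Fin a) :=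
  (Tuple.sort (π ∘ e))⁻¹

theorem permRestrictionIs_permRestrict (π : Equiv.Perm (Fin n)) {e : Fin a → Fin n}
    (he : Injective e) : PermRestrictionIs π e (permRestrict π e) := by
  intro i j
  have hsort : StrictMono ((π ∘ e) ∘ Tuple.sort (π ∘ e)) :=
    (Tuple.monotone_sort _).strictMono_of_injective
      ((π.injective.comp he).comp (Tuple.sort _).injective)
  simpa [permRestrict] using
    (hsort.lt_iff_lt (a := permRestrict π e i) (b := permRestrict π e j)).symm

theorem VCDimLE.image_permRestrict (hP : VCDimLE n k P) {e : Fin a → Fin n} (he : StrictMono e) :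
    VCDimLE a k (P.image (permRestrict · e)) := by
  rintro b ⟨hb, hshat⟩
  refine hP (e ∘ b) ⟨he.comp hb, fun τ => ?_⟩
  obtain ⟨σ, hσ, hτ⟩ := hshat τ
  obtain ⟨π, hπ, rfl⟩ := mem_image.mp hσ
  exact ⟨π, hπ, fun i j =>
    (hτ i j).trans (permRestrictionIs_permRestrict π he.injective (b i) (b j))⟩

/-- The values of `π` in a division of `[n]` into intervals of length `q`. -/
def blockIndex (q : ℕ) (π : Equiv.Perm (Fin n)) (j : Fin n) : ℕ := π j / q

theorem card_le_card_image_blockIndex_mul (hq : 0 < q) (P : Finset (Equiv.Perm (Fin n))) :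
    #P ≤ #(P.image (blockIndex q)) * q ^ n := by
  calc #P ≤ #(P.image (blockIndex q) ×ˢ (univ : Finset (Fin n → Fin q))) := by
        refine card_le_card_of_injOn
          (fun π => (blockIndex q π, fun j => ⟨π j % q, Nat.mod_lt _ hq⟩))
          (fun π hπ => mk_mem_product (mem_image_of_mem _ hπ) (mem_univ _)) fun π _ π' _ h => ?_
        obtain ⟨hdiv, hmod⟩ := Prod.mk.inj h
        exact Equiv.ext fun j => Fin.ext <| Nat.ext_div_mod (congrFun hdiv j)
          (congrArg Fin.val (congrFun hmod j))
    _ = #(P.image (blockIndex q)) * q ^ n := by simp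

theorem VCDimLE.intervalDimLE_image_blockIndex (hP : VCDimLE n k P) (q : ℕ) :
    IntervalDimLE univ k (P.image (blockIndex q)) := by
  intro g hg J _ hshat
  by_contra! hJ
  obtain ⟨J', hJ', hcard⟩ := exists_subset_card_eq (Nat.succ_le_of_lt hJ)
  let a := J'.orderEmbOfFin hcard
  refine hP a ⟨a.strictMono, fun σ => ?_⟩
  obtain ⟨π, hπ, hσ⟩ : ∃ π ∈ P, ∀ i, g (blockIndex q π (a i)) = σ i := by
    obtain ⟨y, hy, hyσ⟩ := hshat (extend a σ 0)
    obtain ⟨π, hπ, rfl⟩ : ∃ π ∈ P, g ∘ blockIndex q π = y := by simpa using hy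
    exact ⟨π, hπ, fun i => (hyσ _ (hJ' (orderEmbOfFin_mem _ _ _))).trans
      (a.injective.extend_apply _ _ _)⟩
  have hmono : Monotone fun v : Fin n => g (v / q) :=
    fun v w hvw => hg (Nat.div_le_div_right hvw)
  have hlt {i j : Fin (k + 1)} (hij : σ i < σ j) : π (a i) < π (a j) := by
    rw [← hσ, ← hσ] at hij
    exact hmono.reflect_lt hij
  refine ⟨π, hπ, fun i j => ⟨hlt, fun hij => ?_⟩⟩
  by_contra! hji
  rcases hji.lt_or_eq with hji | hji
  · exact (hlt hji).asymm hij
  · simp [σ.injective hji] at hij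

/-- Adding `i` to the `i`-th value makes a monotone map strictly monotone, and hence determined by
its range. -/
theorem card_le_two_pow_of_monotone {T : Finset (Fin a → ℕ)} (hmono : ∀ f ∈ T, Monotone f)
    (hlt : ∀ f ∈ T, ∀ i, f i < m) : #T ≤ 2 ^ (a + m) := by
  have hstrict {f : Fin a → ℕ} (hf : f ∈ T) : StrictMono fun i => f i + i :=
    (hmono f hf).add_strictMono Fin.val_strictMono
  calc #T ≤ #(range (a + m)).powerset := by
        refine card_le_card_of_injOn (fun f => univ.image fun i => f i + i) (fun f hf => ?_)
          fun f hf f' hf' h => ?_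
        · refine mem_coe.mpr (mem_powerset.mpr (image_subset_iff.mpr fun i _ => mem_range.mpr ?_))
          have := hlt f hf i
          omega
        · have hrange := congrArg (fun s : Finset ℕ => (s : Set ℕ)) h
          simp only [coe_image, coe_univ, Set.image_univ] at hrange
          have := ((hstrict hf).range_inj (hstrict hf')).mp hrange
          exact funext fun i => Nat.add_right_cancel (congrFun this i)
    _ = 2 ^ (a + m) := by rw [card_powerset, card_range]

/-- The block indices of `π` at the positions `e`, in increasing order. -/
def sortedBlockIndex (q : ℕ) (e : Fin a → Fin n) (π : Equiv.Perm (Fin n)) : Fin a → ℕ :=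
  blockIndex q π ∘ e ∘ (permRestrict π e).symm

theorem sortedBlockIndex_monotone (q : ℕ) (e : Fin a → Fin n) (π : Equiv.Perm (Fin n)) :
    Monotone (sortedBlockIndex q e π) :=
  fun _ _ hij => Nat.div_le_div_right (Tuple.monotone_sort (π ∘ e) hij)

theorem card_restrictCoords_image_blockIndex_le (hm : n ≤ q * m) (P : Finset (Equiv.Perm (Fin n)))
    (A : Finset (Fin n)) :
    #(restrictCoords A (P.image (blockIndex q))) ≤
      #(P.image (permRestrict · (A.orderEmbOfFin rfl))) * 2 ^ (#A + m) := by
  let e := A.orderEmbOfFin rfl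
  have hext (f : Fin n → ℕ) : A.piecewise f 0 = extend e (f ∘ e) 0 := by
    ext j
    by_cases hj : j ∈ A
    · obtain ⟨i, rfl⟩ : j ∈ Set.range e := (range_orderEmbOfFin A rfl).symm ▸ hj
      rw [piecewise_eq_of_mem _ _ _ hj, e.injective.extend_apply, comp_apply]
    · rw [piecewise_eq_of_notMem _ _ _ hj, extend_apply' _ _ _ fun ⟨i, hi⟩ =>
        hj (hi ▸ orderEmbOfFin_mem A rfl i)]
  have hsub : restrictCoords A (P.image (blockIndex q)) ⊆
      (P.image (permRestrict · e) ×ˢ P.image (sortedBlockIndex q e)).image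
        fun p => extend e (p.2 ∘ p.1) 0 := by
    intro y hy
    obtain ⟨π, hπ, rfl⟩ : ∃ π ∈ P, A.piecewise (blockIndex q π) 0 = y := by
      simpa [restrictCoords] using hy
    refine mem_image.mpr ⟨(permRestrict π e, sortedBlockIndex q e π),
      mk_mem_product (mem_image_of_mem _ hπ) (mem_image_of_mem _ hπ), ?_⟩
    rw [hext]
    congr 1
    ext i
    simp [sortedBlockIndex]
  calc #(restrictCoords A (P.image (blockIndex q)))
      ≤ #(P.image (permRestrict · e)) * #(P.image (sortedBlockIndex q e)) :=
        (card_le_card hsub).trans (card_image_le.trans_eq (card_product _ _))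
    _ ≤ #(P.image (permRestrict · e)) * 2 ^ (#A + m) := by
        gcongr
        refine card_le_two_pow_of_monotone (forall_mem_image.mpr fun π _ =>
          sortedBlockIndex_monotone q e π) (forall_mem_image.mpr fun π _ i => ?_)
        exact Nat.div_lt_of_lt_mul ((Fin.is_lt _).trans_le hm)

theorem VCDimLE.exists_card_le_mul_card_restriction (hP : VCDimLE n k P) (hq : 0 < q)
    (hm : n ≤ q * m) (hζ₁ : 1 ≤ ζ)
    (hζ : FormationBound (Σ _ : Fin n, Fin n → ℕ) (k + 1) m ζ ζ) :
    ∃ a ≤ 2 * ζ * k * m, ∃ P' : Finset (Equiv.Perm (Fin a)), VCDimLE a k P' ∧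
      #P ≤ q ^ n * (2 * ζ) ^ n * 2 ^ (a + m) * #P' := by
  obtain ⟨A, hA, hle⟩ :=
    (hP.intervalDimLE_image_blockIndex q).exists_card_restrictCoords_le
      (forall_mem_image.mpr fun π _ j => Nat.div_lt_of_lt_mul ((π j).isLt.trans_le hm)) hζ₁ hζ univ
  rw [restrictCoords_univ, card_univ, Fintype.card_fin] at hle
  refine ⟨#A, hA, _, hP.image_permRestrict (A.orderEmbOfFin rfl).strictMono, ?_⟩
  calc #P ≤ #(P.image (blockIndex q)) * q ^ n := card_le_card_image_blockIndex_mul hq P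
    _ ≤ (2 * ζ) ^ n *
          (#(P.image (permRestrict · (A.orderEmbOfFin rfl))) * 2 ^ (#A + m)) * q ^ n := by
        gcongr
        exact hle.trans (Nat.mul_le_mul_left _ (card_restrictCoords_image_blockIndex_le hm P A))
    _ = _ := by ring

end Permutations

section Recursion

variable {n k K ζ : ℕ} {P : Finset (Equiv.Perm (Fin n))}

theorem card_perm_le_pow {q : ℕ} (hn : n ≤ q) (P : Finset (Equiv.Perm (Fin n))) : #P ≤ q ^ n :=
  calc #P ≤ n.factorial := (card_le_univ P).trans_eq (by rw [Fintype.card_perm, Fintype.card_fin])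
    _ ≤ n ^ n := n.factorial_le_pow
    _ ≤ q ^ n := Nat.pow_le_pow_left hn n

/-- The factor per position that is lost in one round of the recursion. The interval length is
`q = 4 * ζ * k * K`, which makes the number of remaining positions at most `n / K`. -/
def roundCost (ζ k K : ℕ) : ℕ := 8 * (4 * ζ * k * K) * ζ

theorem VCDimLE.exists_card_le_roundCost_pow_mul (hP : VCDimLE n k P) (hk : 1 ≤ k) (hζ₁ : 1 ≤ ζ)
    (hK : 2 ≤ K) (hζ : FormationBound (Σ _ : Fin n, Fin n → ℕ) (k + 1) n ζ ζ)
    (hn : 4 * ζ * k * K ≤ n) :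
    ∃ a, a * K ≤ n ∧ ∃ P' : Finset (Equiv.Perm (Fin a)), VCDimLE a k P' ∧
      #P ≤ roundCost ζ k K ^ n * #P' := by
  set q := 4 * ζ * k * K with hq
  have hq₂ : 2 ≤ q := hK.trans (Nat.le_mul_of_pos_left K (by positivity))
  have hdiv : q * (n / q) ≤ n := Nat.mul_div_le n q
  have hm : n / q + 1 ≤ n := by
    have := Nat.mul_le_mul_right (n / q) hq₂
    omega
  obtain ⟨a, ha, P', hP', hle⟩ := hP.exists_card_le_mul_card_restriction (by omega)
    (Nat.lt_mul_div_succ n (by omega)).le hζ₁ (hζ.mono hm le_rfl le_rfl)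
  have haK : a * K ≤ n := by
    have : 2 * (a * K) ≤ q * (n / q + 1) := by
      calc 2 * (a * K) ≤ 2 * (2 * ζ * k * (n / q + 1) * K) := by gcongr
        _ = q * (n / q + 1) := by rw [hq]; ring
    rw [mul_add_one] at this
    omega
  refine ⟨a, haK, P', hP', hle.trans ?_⟩
  calc q ^ n * (2 * ζ) ^ n * 2 ^ (a + (n / q + 1)) * #P'
      ≤ q ^ n * (2 * ζ) ^ n * 2 ^ (n + n) * #P' := by
        gcongr
        · norm_num
        · exact (Nat.le_mul_of_pos_right a (by omega)).trans haK
    _ = roundCost ζ k K ^ n * #P' := by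
        rw [roundCost, ← hq, ← two_mul, pow_mul, ← mul_pow, ← mul_pow]
        ring

theorem VCDimLE.card_pow_le (hP : VCDimLE n k P) (hk : 1 ≤ k) (hζ₁ : 1 ≤ ζ) (hK : 2 ≤ K)
    (hζ : ∀ γ : Type, FormationBound γ (k + 1) n ζ ζ) :
    #P ^ K ≤ roundCost ζ k K ^ (n * (K + 2)) := by
  induction n using Nat.strong_induction_on with
  | _ n ih =>
    set X := roundCost ζ k K
    have hX : 4 * ζ * k * K ≤ X :=
      (Nat.le_mul_of_pos_left _ (by norm_num)).trans (Nat.le_mul_of_pos_right _ hζ₁)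
    have hX₁ : 1 ≤ X := hX.trans' (Nat.one_le_iff_ne_zero.mpr (by positivity))
    rcases le_total n (4 * ζ * k * K) with hn | hn
    · calc #P ^ K ≤ (X ^ n) ^ K := Nat.pow_le_pow_left (card_perm_le_pow (hn.trans hX) P) K
        _ = X ^ (n * K) := (pow_mul X n K).symm
        _ ≤ X ^ (n * (K + 2)) := by gcongr; omega
    · obtain ⟨a, haK, P', hP', hle⟩ := hP.exists_card_le_roundCost_pow_mul hk hζ₁ hK (hζ _) hn
      have hn₁ : 1 ≤ n := hn.trans' (Nat.one_le_iff_ne_zero.mpr (by positivity))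
      have ha : a * 2 ≤ a * K := Nat.mul_le_mul_left a hK
      calc #P ^ K ≤ (X ^ n * #P') ^ K := Nat.pow_le_pow_left hle K
        _ = X ^ (n * K) * #P' ^ K := by rw [mul_pow, pow_mul]
        _ ≤ X ^ (n * K) * X ^ (a * (K + 2)) := by
            refine Nat.mul_le_mul_left _ ?_
            exact ih a (by omega) hP' fun γ => (hζ γ).mono (by omega) le_rfl le_rfl
        _ ≤ X ^ (n * K) * X ^ (n * 2) := by
            refine Nat.mul_le_mul_left _ (Nat.pow_le_pow_right hX₁ ?_)
            rw [mul_add]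
            omega
        _ = X ^ (n * (K + 2)) := by rw [← pow_add, mul_add]

theorem natCast_le_two_rpow (m : ℕ) : (m : ℝ) ≤ 2 ^ (m : ℝ) := by
  rw [Real.rpow_natCast]
  exact_mod_cast Nat.lt_two_pow_self.le

theorem roundCost_le_two_rpow {Z : ℝ} (hζ : (ζ : ℝ) ≤ 2 ^ Z) :
    (roundCost ζ k K : ℝ) ≤ 2 ^ (2 * Z + k + K + 5) := by
  calc (roundCost ζ k K : ℝ) = ζ ^ 2 * k * K * 2 ^ 5 := by rw [roundCost]; push_cast; ring
    _ ≤ (2 ^ Z) ^ 2 * 2 ^ (k : ℝ) * 2 ^ (K : ℝ) * 2 ^ 5 := by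
        gcongr
        exacts [natCast_le_two_rpow k, natCast_le_two_rpow K]
    _ = 2 ^ (2 * Z + k + K + 5) := by
        rw [Real.rpow_add two_pos, Real.rpow_add two_pos, Real.rpow_add two_pos, mul_comm 2 Z,
          Real.rpow_mul two_pos.le]
        norm_num

theorem le_two_rpow_of_pow_le {x X Y : ℝ} (hK : 0 < K) (hX₀ : 0 ≤ X) (hX : X ≤ 2 ^ Y)
    (hx : x ^ K ≤ X ^ (n * (K + 2))) : x ≤ 2 ^ (n * ((1 + 2 / K) * Y)) := by
  refine le_of_pow_le_pow_left₀ hK.ne' (by positivity) (hx.trans ?_)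
  calc X ^ (n * (K + 2)) ≤ (2 ^ Y) ^ (n * (K + 2)) := by gcongr
    _ = (2 ^ (n * ((1 + 2 / K) * Y))) ^ K := by
        rw [← Real.rpow_natCast, ← Real.rpow_natCast, ← Real.rpow_mul two_pos.le,
          ← Real.rpow_mul two_pos.le]
        congr 1
        push_cast
        field_simp

theorem one_add_two_div_mul_le {x w p D : ℝ} (hx : 1 ≤ x) (hp : 0 ≤ p) (hD : 0 ≤ D)
    (hw : w ≤ x * p) : (1 + 2 / (x + 1)) * (2 * w + D * p) ≤ 2 * w + (2 * D + 4) * p := by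
  have hdiv : 2 / (x + 1) * (2 * w + D * p) ≤ (D + 4) * p := by
    rw [div_mul_eq_mul_div, div_le_iff₀ (by linarith)]
    nlinarith [mul_le_mul_of_nonneg_right hx (mul_nonneg hD hp)]
  linarith

theorem recursion_exponent_le {t : ℕ} (ht : 2 ≤ t) {x C c : ℝ} (hx : 1 ≤ x) (hC : 0 ≤ C)
    (hc : 0 ≤ c) :
    (1 + 2 / (x + 1)) * (2 * (x ^ t / t.factorial + C * x ^ (t - 1)) + c + (x + 1) + 5) ≤
      2 / t.factorial * x ^ t + (2 * (2 * C + c + 7) + 4) * x ^ (t - 1) := by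
  have hxp : x ≤ x ^ (t - 1) := le_self_pow₀ hx (by omega)
  have hw : x ^ t / t.factorial ≤ x * x ^ (t - 1) := by
    rw [mul_pow_sub_one (by omega)]
    exact div_le_self (by positivity) (mod_cast t.factorial_pos)
  calc (1 + 2 / (x + 1)) * (2 * (x ^ t / t.factorial + C * x ^ (t - 1)) + c + (x + 1) + 5)
      ≤ (1 + 2 / (x + 1)) * (2 * (x ^ t / t.factorial) + (2 * C + c + 7) * x ^ (t - 1)) := by
        refine mul_le_mul_of_nonneg_left ?_ (by positivity)
        linarith [mul_le_mul_of_nonneg_left (hx.trans hxp) hc]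
    _ ≤ 2 * (x ^ t / t.factorial) + (2 * (2 * C + c + 7) + 4) * x ^ (t - 1) :=
        one_add_two_div_mul_le hx (by positivity) (by positivity) hw
    _ = _ := by ring

end Recursion

/-- For every `t ≥ 2` there is a constant `C_t` such that for every `n ≥ 1`,
every family of `n`-permutations with VC-dimension at most `2t+2` has size at most
`2 ^ (n·((2/t!)·α(n)^t + C_t·α(n)^(t−1)))`. -/
theorem r_even_upper_bound :
    ∀ t : ℕ, 2 ≤ t → ∃ C : ℝ, ∀ n : ℕ, 1 ≤ n →
      ∀ P : Finset (Equiv.Perm (Fin n)), VCDimLE n (2 * t + 2) P →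
        (P.card : ℝ) ≤ (2 : ℝ) ^ ((n : ℝ) *
          ((2 / (Nat.factorial t : ℝ)) * (invAck n : ℝ) ^ t
            + C * (invAck n : ℝ) ^ (t - 1))) := by
  intro t ht
  obtain ⟨C, hC, hbound⟩ := exists_formationBound_invAck ht
  refine ⟨2 * (2 * C + (2 * t + 2 : ℕ) + 7) + 4, fun n hn P hP => ?_⟩
  obtain ⟨ζ, hζ₁, hζ_le, hζ⟩ := hbound n
  have hα : 1 ≤ invAck n := (invAck_spec n).1
  have hcard := hP.card_pow_le (K := invAck n + 1) (by omega) hζ₁ (by omega) hζ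
  have hround := roundCost_le_two_rpow (k := 2 * t + 2) (K := invAck n + 1) hζ_le
  refine (le_two_rpow_of_pow_le (Nat.succ_pos _) (Nat.cast_nonneg _) hround
    (mod_cast hcard)).trans ?_
  gcongr
  · norm_num
  · rw [Nat.cast_add_one]
    exact recursion_exponent_le ht (mod_cast hα) hC (Nat.cast_nonneg _)
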